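/- Let n ≥ 2, 1 < r < n, r* = nr/(n−r), and let Ω ∈ L^{r,r*}(𝕊^{n−1}) have mean zero, with 0 < α < 1 + n/r'. Let r'n/(r'+n) < p < n/α, 1/q = 1/p − α/n, and α − n/p < λ < 1 + n/r' − n/p. Then there is C such that for all f ∈ C_c^∞(ℝ^n), (∫_{ℝ^n} (|x|^λ |T_{Ω,α}f(x)|)^q dx)^{1/q} ≤ C (∫_{ℝ^n} (|x|^λ |∇f(x)|)^p dx)^{1/p}. -/

import Mathlib

open MeasureTheory Metric Set Filter
open scoped ENNReal NNReal Topology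

noncomputable section

abbrev Rn (n : ℕ) := EuclideanSpace ℝ (Fin n)

/-- An axis-parallel half-open cube in `ℝⁿ`. -/
structure Cube (n : ℕ) where
  corner : Fin n → ℝ
  side : ℝ
  side_pos : 0 < side

/-- The set of points of a cube. -/
def Cube.carrier {n : ℕ} (Q : Cube n) : Set (Rn n) :=
  {x | ∀ i, Q.corner i ≤ x i ∧ x i < Q.corner i + Q.side}

/-- Surface measure on the unit sphere `𝕊^{n-1} ⊆ ℝⁿ`. -/
def sphereMeasure (n : ℕ) : Measure (Rn n) :=
  (MeasureTheory.Measure.hausdorffMeasure ((n : ℝ) - 1)).restrict (sphere (0 : Rn n) 1)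

/-- `f ∈ C_c^∞(ℝⁿ)`. -/
def IsCcSmooth {n : ℕ} (f : Rn n → ℝ) : Prop :=
  ContDiff ℝ (⊤ : ℕ∞) f ∧ HasCompactSupport f

/-- Truncated rough fractional singular integral. -/
def roughOpTrunc (n : ℕ) (α : ℝ) (Ω f : Rn n → ℝ) (x : Rn n) (ε : ℝ) : ℝ :=
  ∫ y in {y : Rn n | ε < ‖y‖}, (Ω (‖y‖⁻¹ • y) / ‖y‖ ^ ((n : ℝ) + 1 - α)) * f (x - y)

/-- The rough fractional singular integral `T_{Ω,α} f`, as a principal value. -/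
def roughOp (n : ℕ) (α : ℝ) (Ω f : Rn n → ℝ) (x : Rn n) : ℝ :=
  limUnder (𝓝[>] (0 : ℝ)) (roughOpTrunc n α Ω f x)

/-- Riesz potential (modulo its normalizing constant) of a nonnegative function. -/
def rieszPot (n : ℕ) (α : ℝ) (g : Rn n → ℝ) (x : Rn n) : ℝ≥0∞ :=
  ∫⁻ y, ENNReal.ofReal (g y) / ENNReal.ofReal (‖x - y‖ ^ ((n : ℝ) - α))

/-- `|∇f|`. -/
def gradNorm {n : ℕ} (f : Rn n → ℝ) (y : Rn n) : ℝ := ‖gradient f y‖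

/-- Weak Lorentz norm `‖Ω‖_{L^{r,∞}(𝕊^{n-1})}`. -/
def weakLorentzSphere (n : ℕ) (r : ℝ) (Ω : Rn n → ℝ) : ℝ≥0∞ :=
  ⨆ (t : ℝ) (_ : 0 < t), ENNReal.ofReal t * sphereMeasure n {y | t < |Ω y|} ^ (1 / r)

/-- Lorentz norm `‖Ω‖_{L^{r,q}(𝕊^{n-1})}`. -/
def lorentzSphere (n : ℕ) (r q : ℝ) (Ω : Rn n → ℝ) : ℝ≥0∞ :=
  (ENNReal.ofReal r *
      ∫⁻ t in Ioi (0 : ℝ),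
        ENNReal.ofReal t ^ q * sphereMeasure n {y | t < |Ω y|} ^ (q / r) / ENNReal.ofReal t) ^ (1 / q)

/-- The Young function `Φ(t) = t log(1+t)^{1/n'}`, `1/n' = (n-1)/n`. -/
def orliczYoung (n : ℕ) (t : ℝ) : ℝ := t * Real.log (1 + t) ^ (((n : ℝ) - 1) / n)

/-- Admissible Orlicz levels for the `L(log L)^{1/n'}` norm w.r.t. normalized surface measure. -/
def orliczSet (n : ℕ) (Ω : Rn n → ℝ) : Set ℝ :=
  {lam | 0 < lam ∧ ⨍ y, orliczYoung n (|Ω y| / lam) ∂sphereMeasure n ≤ 1}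

/-- Orlicz norm `‖Ω‖_{L(log L)^{1/n'}(𝕊^{n-1})}`. -/
def orliczSphereNorm (n : ℕ) (Ω : Rn n → ℝ) : ℝ := sInf (orliczSet n Ω)

/-- A sparse family of cubes. -/
def IsSparse {n : ℕ} (𝒮 : Set (Cube n)) : Prop :=
  ∃ E : Cube n → Set (Rn n),
    (∀ Q ∈ 𝒮, E Q ⊆ Q.carrier ∧ volume Q.carrier ≤ 2 * volume (E Q)) ∧
    𝒮.Pairwise fun Q P => Disjoint (E Q) (E P)

/-- A dyadic grid of cubes. -/
def IsDyadicGrid {n : ℕ} (𝒟 : Set (Cube n)) : Prop :=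
  (∀ Q ∈ 𝒟, ∃ k : ℤ, Q.side = (2 : ℝ) ^ k) ∧
  (∀ (k : ℤ) (x : Rn n), ∃! Q : Cube n, Q ∈ 𝒟 ∧ Q.side = (2 : ℝ) ^ k ∧ x ∈ Q.carrier) ∧
  (∀ Q ∈ 𝒟, ∀ P ∈ 𝒟, Disjoint Q.carrier P.carrier ∨ Q.carrier ⊆ P.carrier ∨ P.carrier ⊆ Q.carrier)

/-- The shifted dyadic grid `𝒟_t = {2^k([0,1)^n + m + (-1)^k t)}`. -/
def shiftedGrid (n : ℕ) (t : Fin n → ℝ) : Set (Cube n) :=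
  {Q | ∃ (k : ℤ) (m : Fin n → ℤ),
      Q.side = (2 : ℝ) ^ k ∧ Q.corner = fun i => (2 : ℝ) ^ k * ((m i : ℝ) + (-1 : ℝ) ^ k * t i)}

/-- `(⨍_Q |g|^s)^{1/s}` as an extended nonnegative real. -/
def avgLs (n : ℕ) (s : ℝ) (Q : Cube n) (g : Rn n → ℝ) : ℝ≥0∞ :=
  ((volume Q.carrier)⁻¹ * ∫⁻ y in Q.carrier, ENNReal.ofReal |g y| ^ s) ^ (1 / s)

/-- The `L^s` sparse (or dyadic) fractional operator `I^𝒮_{α,L^s}`. -/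
def sparseOpLs (n : ℕ) (α s : ℝ) (𝒮 : Set (Cube n)) (g : Rn n → ℝ) (x : Rn n) : ℝ≥0∞ :=
  ∑' Q : 𝒮, Set.indicator (Q : Cube n).carrier
      (fun _ => ENNReal.ofReal ((Q : Cube n).side ^ α) * avgLs n s (Q : Cube n) g) x

/-- The `L^s` fractional maximal operator `M_{α,L^s}`. -/
def maxOpLs (n : ℕ) (α s : ℝ) (g : Rn n → ℝ) (x : Rn n) : ℝ≥0∞ :=
  ⨆ (Q : Cube n) (_ : x ∈ Q.carrier), ENNReal.ofReal (Q.side ^ α) * avgLs n s Q g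

/-- The measure `w dx` associated with a weight `w`. -/
def wMeasure (n : ℕ) (w : Rn n → ℝ) : Measure (Rn n) :=
  volume.withDensity fun x => ENNReal.ofReal (w x)

/-- Muckenhoupt `A_∞` (via the standard fair-proportion characterization). -/
def IsAinfty {n : ℕ} (w : Rn n → ℝ) : Prop :=
  ∃ C > (0 : ℝ), ∃ δ > (0 : ℝ), ∀ Q : Cube n, ∀ S ⊆ Q.carrier, MeasurableSet S →
    wMeasure n w S ≤
      ENNReal.ofReal C * (volume S / volume Q.carrier) ^ δ * wMeasure n w Q.carrier

/-- `‖g‖_{L^p(w)}` for an `ℝ≥0∞`-valued `g`. -/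
def lpNormW (n : ℕ) (p : ℝ) (w : Rn n → ℝ) (g : Rn n → ℝ≥0∞) : ℝ≥0∞ :=
  (∫⁻ x, g x ^ p ∂wMeasure n w) ^ (1 / p)

/-- `‖g‖_{L^{p,∞}(w)}` for an `ℝ≥0∞`-valued `g`. -/
def weakNormW (n : ℕ) (p : ℝ) (w : Rn n → ℝ) (g : Rn n → ℝ≥0∞) : ℝ≥0∞ :=
  ⨆ (lam : ℝ) (_ : 0 < lam),
    ENNReal.ofReal lam * wMeasure n w {x | ENNReal.ofReal lam < g x} ^ (1 / p)

/-- Unweighted `L^p` "norm" of an `ℝ≥0∞`-valued function. -/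
def lqNorm (n : ℕ) (p : ℝ) (g : Rn n → ℝ≥0∞) : ℝ≥0∞ :=
  (∫⁻ x, g x ^ p) ^ (1 / p)

/-- Unweighted weak `L^p` norm of an `ℝ≥0∞`-valued function. -/
def weakNorm (n : ℕ) (p : ℝ) (g : Rn n → ℝ≥0∞) : ℝ≥0∞ :=
  ⨆ (lam : ℝ) (_ : 0 < lam),
    ENNReal.ofReal lam * volume {x | ENNReal.ofReal lam < g x} ^ (1 / p)

/-- Maximal function of a measure over cubes. -/
def measMax (n : ℕ) (μ : Measure (Rn n)) (x : Rn n) : ℝ≥0∞ :=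
  ⨆ (Q : Cube n) (_ : x ∈ Q.carrier), μ Q.carrier / volume Q.carrier

/-- The rough fractional maximal operator `M_{Ω,α}`. -/
def roughMax (n : ℕ) (α : ℝ) (Ω f : Rn n → ℝ) (x : Rn n) : ℝ≥0∞ :=
  ⨆ (t : ℝ) (_ : 0 < t),
    ENNReal.ofReal (t ^ (α - 1)) * ((volume (ball (0 : Rn n) t))⁻¹ *
      ∫⁻ y in ball (0 : Rn n) t, ENNReal.ofReal |Ω (‖y‖⁻¹ • y) * f (x - y)|)

/-- Average of `f` over the ball `B(x,t)`. -/
def ballAvg {n : ℕ} (f : Rn n → ℝ) (x : Rn n) (t : ℝ) : ℝ :=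
  ⨍ y in ball x t, f y

/-- The sharp rough fractional maximal operator `M^#_{Ω,α}`. -/
def roughMaxSharp (n : ℕ) (α : ℝ) (Ω f : Rn n → ℝ) (x : Rn n) : ℝ≥0∞ :=
  ⨆ (t : ℝ) (_ : 0 < t),
    ENNReal.ofReal (t ^ (α - 1)) * ((volume (ball (0 : Rn n) t))⁻¹ *
      ∫⁻ y in ball (0 : Rn n) t,
        ENNReal.ofReal (|Ω (‖y‖⁻¹ • y)| * |f (x - y) - ballAvg f x t|))

/-- The natural rough maximal operator `M^♮_Ω` (with `α = 1`). -/
def roughMaxNatural (n : ℕ) (Ω f : Rn n → ℝ) (x : Rn n) : ℝ≥0∞ :=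
  ⨆ (t : ℝ) (_ : 0 < t),
    ENNReal.ofReal |⨍ y in ball (0 : Rn n) t, Ω (‖y‖⁻¹ • y) * f (x - y)|

/-- The fractional spherical maximal operator `𝒮_β`. -/
def sphMax (n : ℕ) (β : ℝ) (f : Rn n → ℝ) (x : Rn n) : ℝ≥0∞ :=
  ⨆ (r : ℝ) (_ : 0 < r),
    ENNReal.ofReal (r ^ β) *
      ((MeasureTheory.Measure.hausdorffMeasure ((n : ℝ) - 1) (sphere x r))⁻¹ *
        ∫⁻ y in sphere x r, ENNReal.ofReal |f y|
          ∂(MeasureTheory.Measure.hausdorffMeasure ((n : ℝ) - 1)))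


/-- The measure `w^q dx`. -/
def wqMeasure (n : ℕ) (q : ℝ) (w : Rn n → ℝ) : Measure (Rn n) :=
  volume.withDensity fun x => ENNReal.ofReal (w x) ^ q

/-- Weak norm `‖g‖_{L^{q,∞}(w^q)}` for `ℝ≥0∞`-valued `g`. -/
def weakNormWq (n : ℕ) (q : ℝ) (w : Rn n → ℝ) (g : Rn n → ℝ≥0∞) : ℝ≥0∞ :=
  ⨆ (lam : ℝ) (_ : 0 < lam),
    ENNReal.ofReal lam * wqMeasure n q w {x | ENNReal.ofReal lam < g x} ^ (1 / q)


open Classical in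
theorem unif_aux {X : Type*} [MetricSpace X] [SecondCountableTopology X] [MeasurableSpace X] [BorelSpace X]
    (μ ν : Measure X) [IsFiniteMeasure μ] [IsFiniteMeasure ν] (g h : ℝ → ℝ≥0∞)
    (hμ : ∀ x s, 0 < s → μ (ball x s) = g s) (hν : ∀ x s, 0 < s → ν (ball x s) = h s)
    (h0 : ∀ s, 0 < s → h s ≠ 0) (ht : ∀ s, 0 < s → h s ≠ ⊤)
    (u : ℕ → ℝ) (hu : ∀ k, 0 < u k) (hu0 : Tendsto u atTop (𝓝 0)) (L : ℝ≥0∞)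
    (hL : Tendsto (fun k => g (u k) / h (u k)) atTop (𝓝 L)) (U : Set X) (hU : IsOpen U) :
    μ U ≤ L * ν U := by
  have hmeas : ∀ k, MeasurableSet {z : X × X | dist z.1 z.2 < u k} := fun k =>
    (isOpen_lt continuous_dist continuous_const).measurableSet
  have hUm := hU.measurableSet
  let S : ℕ → Set (X × X) := fun k => (U ×ˢ U) ∩ {z : X × X | dist z.1 z.2 < u k}
  have hS : ∀ k, MeasurableSet (S k) := fun k => (hUm.prod hUm).inter (hmeas k)
  have h1 : ∀ k x, x ∈ U → Prod.mk x ⁻¹' (S k) = U ∩ ball x (u k) := by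
    intro k x hx; ext y; simp [S, hx, mem_ball, dist_comm]
  have h2 : ∀ k y, (fun x => (x, y)) ⁻¹' (S k) ⊆ (if y ∈ U then ball y (u k) else ∅) := by
    intro k y x hx
    simp only [S, mem_preimage, mem_inter_iff, mem_prod, mem_ofPred_eq] at hx
    simp [hx.1.2, mem_ball, hx.2]
  have key : ∀ k, ∫⁻ x in U, ν (U ∩ ball x (u k)) / h (u k) ∂μ ≤ g (u k) / h (u k) * ν U := by
    intro k
    have e1 : ∫⁻ x in U, ν (U ∩ ball x (u k)) ∂μ ≤ (μ.prod ν) (S k) := by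
      rw [Measure.prod_apply (hS k)]
      refine le_trans (le_of_eq ?_) (setLIntegral_le_lintegral U _)
      exact setLIntegral_congr_fun hUm (fun x hx => by simp only [h1 k x hx])
    have e2 : (μ.prod ν) (S k) ≤ g (u k) * ν U := by
      rw [Measure.prod_apply_symm (hS k)]
      calc _ ≤ ∫⁻ y, U.indicator (fun _ => g (u k)) y ∂ν := by
            refine lintegral_mono fun y => (measure_mono (h2 k y)).trans ?_
            by_cases hy : y ∈ U <;> simp [hy, hμ _ _ (hu k)]
        _ = _ := by rw [lintegral_indicator hUm]; simp
    simp only [div_eq_mul_inv]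
    rw [lintegral_mul_const' _ _ (ENNReal.inv_ne_top.2 (h0 _ (hu k)))]
    calc _ ≤ (g (u k) * ν U) * (h (u k))⁻¹ := by gcongr; exact e1.trans e2
      _ = _ := by ring
  have lim : ∀ x ∈ U, (1:ℝ≥0∞) = liminf (fun k => ν (U ∩ ball x (u k)) / h (u k)) atTop := by
    intro x hx
    obtain ⟨ε, hε, hb⟩ := Metric.isOpen_iff.1 hU x hx
    have : (fun k => ν (U ∩ ball x (u k)) / h (u k)) =ᶠ[atTop] fun _ => 1 := by
      filter_upwards [hu0.eventually (gt_mem_nhds hε)] with k hk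
      rw [inter_eq_right.2 ((ball_subset_ball hk.le).trans hb), hν _ _ (hu k),
        ENNReal.div_self (h0 _ (hu k)) (ht _ (hu k))]
    rw [liminf_congr this]; simp
  have hm : ∀ k, Measurable (fun x => ν (U ∩ ball x (u k)) / h (u k)) := by
    intro k
    have : MeasurableSet ((univ ×ˢ U) ∩ {z : X × X | dist z.1 z.2 < u k}) :=
      (MeasurableSet.univ.prod hUm).inter (hmeas k)
    have h3 := measurable_measure_prodMk_left (ν := ν) this
    have : (fun x => ν (U ∩ ball x (u k))) = fun x => ν (Prod.mk x ⁻¹' ((univ ×ˢ U) ∩ {z : X × X | dist z.1 z.2 < u k})) := by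
      funext x; congr 1; ext y; simp [mem_ball, dist_comm]
    rw [← this] at h3
    exact h3.div_const _
  calc μ U = ∫⁻ x in U, 1 ∂μ := by simp
    _ = ∫⁻ x in U, liminf (fun k => ν (U ∩ ball x (u k)) / h (u k)) atTop ∂μ :=
        setLIntegral_congr_fun hUm lim
    _ ≤ liminf (fun k => ∫⁻ x in U, ν (U ∩ ball x (u k)) / h (u k) ∂μ) atTop :=
        lintegral_liminf_le hm
    _ ≤ liminf (fun k => g (u k) / h (u k) * ν U) atTop := liminf_le_liminf (Eventually.of_forall key)
    _ = L * ν U := (ENNReal.Tendsto.mul_const hL (Or.inr (measure_ne_top _ _))).liminf_eq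

theorem unif_eq {X : Type*} [MetricSpace X] [SecondCountableTopology X] [MeasurableSpace X] [BorelSpace X]
    (μ ν : Measure X) [IsFiniteMeasure μ] [IsFiniteMeasure ν] (g h : ℝ → ℝ≥0∞) (hX : Nonempty X)
    (hμ : ∀ x s, 0 < s → μ (ball x s) = g s) (hν : ∀ x s, 0 < s → ν (ball x s) = h s)
    (hμ0 : μ ≠ 0) (hν0 : ν ≠ 0) : ∃ c : ℝ≥0∞, c ≠ ⊤ ∧ μ = c • ν := by
  have pos : ∀ (μ : Measure X) (g : ℝ → ℝ≥0∞), (∀ x s, 0 < s → μ (ball x s) = g s) → μ ≠ 0 →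
      ∀ s, 0 < s → g s ≠ 0 := by
    intro μ g hμ hμ0 s hs hg
    apply hμ0
    rw [← Measure.measure_univ_eq_zero]
    apply measure_null_of_locally_null
    intro x _
    exact ⟨ball x s, mem_nhdsWithin_of_mem_nhds (ball_mem_nhds x hs), by rw [hμ x s hs, hg]⟩
  have g0 := pos μ g hμ hμ0
  have h0 := pos ν h hν hν0
  obtain ⟨x0⟩ := hX
  have gt : ∀ s, 0 < s → g s ≠ ⊤ := fun s hs => by rw [← hμ x0 s hs]; exact measure_ne_top _ _
  have ht : ∀ s, 0 < s → h s ≠ ⊤ := fun s hs => by rw [← hν x0 s hs]; exact measure_ne_top _ _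
  let u : ℕ → ℝ := fun k => 1 / ((k:ℝ) + 1)
  have hu : ∀ k, 0 < u k := fun k => by positivity
  have hu0 : Tendsto u atTop (𝓝 0) := tendsto_one_div_add_atTop_nhds_zero_nat
  obtain ⟨L, φ, hφ, hL⟩ := CompactSpace.tendsto_subseq (fun k => g (u k) / h (u k))
  have hu0' := hu0.comp hφ.tendsto_atTop
  have A := unif_aux μ ν g h hμ hν h0 ht (u ∘ φ) (fun k => hu _) hu0' L hL
  have hL' : Tendsto (fun k => h ((u ∘ φ) k) / g ((u ∘ φ) k)) atTop (𝓝 L⁻¹) := by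
    have := (continuous_inv.tendsto L).comp hL
    refine this.congr fun k => ?_
    simp only [Function.comp]
    rw [ENNReal.inv_div (Or.inl (ht _ (hu _))) (Or.inl (h0 _ (hu _)))]
  have B := unif_aux ν μ h g hν hμ g0 gt (u ∘ φ) (fun k => hu _) hu0' L⁻¹ hL'
  have m0 : μ univ ≠ 0 := by simpa using hμ0
  have n0 : ν univ ≠ 0 := by simpa using hν0
  have L0 : L ≠ 0 := by
    rintro rfl; exact m0 (by simpa using A univ isOpen_univ)
  have Lt : L ≠ ⊤ := by
    rintro rfl; exact n0 (by simpa using B univ isOpen_univ)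
  refine ⟨L, Lt, ?_⟩
  have eq : ∀ U, IsOpen U → μ U = (L • ν) U := by
    intro U hU
    refine le_antisymm (by simpa using A U hU) ?_
    calc (L • ν) U = L * ν U := by simp
      _ ≤ L * (L⁻¹ * μ U) := by gcongr; exact B U hU
      _ = μ U := by rw [← mul_assoc, ENNReal.mul_inv_cancel L0 Lt, one_mul]
  exact ext_of_generate_finite {U | IsOpen U} (BorelSpace.measurable_eq) isPiSystem_isOpen
    (fun U hU => eq U hU) (eq univ isOpen_univ)


open scoped ENNReal NNReal Topology Pointwise

theorem haus_sphere_lt_top (m : ℕ) :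
    (MeasureTheory.Measure.hausdorffMeasure (m : ℝ)) (sphere (0 : Rn (m+1)) 1) < ⊤ := by
  let ψ : Fin (m+1) → ℝ → (Fin m → ℝ) → Rn (m+1) := fun i e v =>
    WithLp.toLp 2 (Fin.insertNth i e v : Fin (m+1) → ℝ)
  let φ : Fin (m+1) → ℝ → (Fin m → ℝ) → Rn (m+1) := fun i e v => ‖ψ i e v‖⁻¹ • ψ i e v
  let Q : Set (Fin m → ℝ) := Icc (fun _ => -1) (fun _ => 1)
  have hψ : ∀ i e, ContDiff ℝ 1 (ψ i e) := by
    intro i e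
    rw [contDiff_euclidean]
    intro j
    refine Fin.succAboveCases i ?_ (fun k => ?_) j
    · simp only [ψ, Fin.insertNth_apply_same]; exact contDiff_const
    · simp only [ψ, Fin.insertNth_apply_succAbove]; fun_prop
  have hne : ∀ i e v, e ≠ 0 → ψ i e v ≠ 0 := by
    intro i e v he h
    have := congrArg (fun z : Rn (m+1) => z i) h
    simp [ψ] at this
    exact he this
  have hφ : ∀ i e, e ≠ 0 → ContDiff ℝ 1 (φ i e) := by
    intro i e he
    rw [contDiff_iff_contDiffAt]
    intro v
    have h1 := ((hψ i e).contDiffAt (x := v)).norm ℝ (hne i e v he)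
    exact (h1.inv (norm_ne_zero_iff.2 (hne i e v he))).smul (hψ i e).contDiffAt
  have hfin : ∀ i e, e ≠ 0 → (MeasureTheory.Measure.hausdorffMeasure (m : ℝ)) (φ i e '' Q) < ⊤ := by
    intro i e he
    obtain ⟨K, hK⟩ := (hφ i e he).contDiffOn.exists_lipschitzOnWith one_ne_zero
      (convex_Icc _ _ : Convex ℝ Q) isCompact_Icc
    refine (hK.hausdorffMeasure_image_le (by positivity)).trans_lt ?_
    have := hausdorffMeasure_pi_real (ι := Fin m)
    rw [Fintype.card_fin] at this
    rw [this]
    exact ENNReal.mul_lt_top (by simp) (isCompact_Icc.measure_lt_top)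
  have hcov : sphere (0 : Rn (m+1)) 1 ⊆ ⋃ i, (φ i 1 '' Q ∪ φ i (-1) '' Q) := by
    intro x hx
    have hx1 : ‖x‖ = 1 := by simpa using hx
    obtain ⟨i, -, hi⟩ := Finset.exists_max_image Finset.univ (fun i => |x i|) Finset.univ_nonempty
    have hi0 : 0 < |x i| := by
      rw [abs_pos]; intro h0
      have : x = 0 := by
        ext j
        have := hi j (Finset.mem_univ _)
        simp only [h0, abs_zero] at this
        simpa using le_antisymm this (abs_nonneg _)
      simp [this] at hx1
    refine mem_iUnion.2 ⟨i, ?_⟩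
    have key : ∀ e, x i = e * |x i| → x ∈ φ i e '' Q := by
      intro e he
      refine ⟨fun k => x (i.succAbove k) / |x i|, ?_, ?_⟩
      · constructor
        · intro k
          have := hi (i.succAbove k) (Finset.mem_univ _)
          simp only
          rw [le_div_iff₀ hi0]; linarith [neg_abs_le (x (i.succAbove k))]
        · intro k
          have := hi (i.succAbove k) (Finset.mem_univ _)
          simp only
          rw [div_le_iff₀ hi0]; linarith [le_abs_self (x (i.succAbove k))]
      · have : ψ i e (fun k => x (i.succAbove k) / |x i|) = |x i|⁻¹ • x := by
          ext j
          refine Fin.succAboveCases i ?_ (fun k => ?_) j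
          · simp only [ψ, Fin.insertNth_apply_same, PiLp.smul_apply, smul_eq_mul]
            rw [eq_inv_mul_iff_mul_eq₀ hi0.ne', mul_comm]; exact he.symm
          · simp only [ψ, Fin.insertNth_apply_succAbove, PiLp.smul_apply, smul_eq_mul]
            rw [div_eq_inv_mul]
        simp only [φ, this, norm_smul, hx1, norm_inv, Real.norm_eq_abs, abs_abs, mul_one, inv_inv]
        rw [smul_smul, mul_inv_cancel₀ hi0.ne', one_smul]
    rcases le_total 0 (x i) with h | h
    · left; exact key 1 (by rw [abs_of_nonneg h]; ring)
    · right; exact key (-1) (by rw [abs_of_nonpos h]; ring)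
  refine (measure_mono hcov).trans_lt ?_
  refine (measure_iUnion_le _).trans_lt ?_
  rw [tsum_fintype]
  refine ENNReal.sum_lt_top.2 fun i _ => ?_
  exact (measure_union_le _ _).trans_lt (ENNReal.add_lt_top.2 ⟨hfin i 1 (by norm_num), hfin i (-1) (by norm_num)⟩)

theorem haus_sphere_pos (m : ℕ) :
    0 < (MeasureTheory.Measure.hausdorffMeasure (m : ℝ)) (sphere (0 : Rn (m+1)) 1) := by
  let π : Rn (m+1) → (Fin m → ℝ) := fun x j => x j.succ
  have hπ : LipschitzWith 1 π := by
    refine LipschitzWith.of_dist_le_mul fun x y => ?_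
    simp only [NNReal.coe_one, one_mul]
    rw [dist_pi_le_iff dist_nonneg]
    intro j
    have := PiLp.norm_apply_le (x - y) j.succ
    simpa [π, dist_eq_norm] using this
  let c : ℝ := 1 / ((m:ℝ) + 1)
  have hc : 0 < c := by positivity
  have hc1 : (m:ℝ) * c ^ 2 ≤ 1 := by
    simp only [c]; rw [div_pow, one_pow, mul_one_div, div_le_one (by positivity)]
    nlinarith [(Nat.cast_nonneg m : (0:ℝ) ≤ m)]
  have hsub : ball (0 : Fin m → ℝ) c ⊆ π '' sphere (0 : Rn (m+1)) 1 := by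
    intro v hv
    have hv' : ∀ j, |v j| ≤ c := fun j => by
      have := (norm_le_pi_norm v j).trans (by simpa using hv : ‖v‖ < c).le
      simpa using this
    have hs : ∑ j, v j ^ 2 ≤ 1 := by
      calc ∑ j, v j ^ 2 ≤ ∑ j : Fin m, c ^ 2 := Finset.sum_le_sum fun j _ => by
            rw [← sq_abs]; exact pow_le_pow_left₀ (abs_nonneg _) (hv' j) 2
        _ = m * c ^ 2 := by simp
        _ ≤ 1 := hc1
    refine ⟨WithLp.toLp 2 (Fin.cons (Real.sqrt (1 - ∑ j, v j ^ 2)) v : Fin (m+1) → ℝ), ?_, ?_⟩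
    · rw [mem_sphere_zero_iff_norm, EuclideanSpace.norm_eq, Real.sqrt_eq_one]
      rw [Fin.sum_univ_succ]
      simp [Real.sq_sqrt (sub_nonneg.2 hs)]
    · ext j; simp [π]
  have h := hausdorffMeasure_pi_real (ι := Fin m)
  rw [Fintype.card_fin] at h
  calc (0:ℝ≥0∞) < volume (ball (0 : Fin m → ℝ) c) := measure_ball_pos _ _ hc
    _ = (MeasureTheory.Measure.hausdorffMeasure (m : ℝ)) (ball (0 : Fin m → ℝ) c) := by rw [h]
    _ ≤ _ := measure_mono hsub
    _ ≤ _ := by simpa using hπ.hausdorffMeasure_image_le (d := (m:ℝ)) (by positivity) (sphere (0 : Rn (m+1)) 1)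

theorem toSphere_map_eq (n : ℕ) (hn : 2 ≤ n) : ∃ c : ℝ≥0∞, c ≠ ⊤ ∧
    ((volume : Measure (Rn n)).toSphere).map Subtype.val = c • sphereMeasure n := by
  obtain ⟨m, rfl⟩ : ∃ m, n = m + 1 := ⟨n - 1, by omega⟩
  have hd : ((m + 1 : ℕ) : ℝ) - 1 = m := by push_cast; ring
  let H : Measure (Rn (m+1)) := Measure.hausdorffMeasure (m : ℝ)
  let S : Set (Rn (m+1)) := sphere 0 1
  have hSm : MeasurableSet S := isClosed_sphere.measurableSet
  let ν : Measure S := H.comap Subtype.val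
  have hνmap : ν.map Subtype.val = sphereMeasure (m+1) := by
    simp only [ν]
    rw [map_comap_subtype_coe hSm, sphereMeasure, hd]
  have hνa : ∀ A : Set S, MeasurableSet A → ν A = H (Subtype.val '' A) := fun A hA =>
    comap_subtype_coe_apply hSm H A
  have hν_univ : ν univ = H S := by rw [hνa _ .univ]; simp
  haveI : IsFiniteMeasure ν := ⟨by rw [hν_univ]; exact haus_sphere_lt_top m⟩
  have hν0 : ν ≠ 0 := by
    intro h; rw [← Measure.measure_univ_eq_zero, hν_univ] at h
    exact (haus_sphere_pos m).ne' h
  have hrot : ∀ x y : S, ∃ e : Rn (m+1) ≃ₗᵢ[ℝ] Rn (m+1), e x = y := by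
    intro x y
    refine ⟨Submodule.reflection (Submodule.span ℝ {(x : Rn (m+1)) - y})ᗮ, Submodule.reflection_sub ?_⟩
    have h1 := mem_sphere_zero_iff_norm.1 x.2
    have h2 := mem_sphere_zero_iff_norm.1 y.2
    rw [h1, h2]
  have himg : ∀ (x y : S) (s : ℝ) (e : Rn (m+1) ≃ₗᵢ[ℝ] Rn (m+1)), e x = y →
      (Subtype.val '' ball y s : Set (Rn (m+1))) = e '' (Subtype.val '' ball x s) := by
    intro x y s e he
    ext z
    constructor
    · rintro ⟨w, hw, rfl⟩
      refine ⟨e.symm w, ⟨⟨e.symm w, ?_⟩, ?_, rfl⟩, by simp⟩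
      · have := mem_sphere_zero_iff_norm.1 w.2
        simp [S, this]
      · rw [mem_ball, Subtype.dist_eq] at hw ⊢
        rw [← e.dist_map]; simpa [he] using hw
    · rintro ⟨_, ⟨w, hw, rfl⟩, rfl⟩
      refine ⟨⟨e w, ?_⟩, ?_, rfl⟩
      · have := mem_sphere_zero_iff_norm.1 w.2
        simp [S, this]
      · rw [mem_ball, Subtype.dist_eq] at hw ⊢
        rw [← he]; simpa using hw
  have x0 : S := ⟨EuclideanSpace.single 0 1, by simp [S]⟩
  have B1 : ∀ x s, 0 < s → ν (ball x s) = ν (ball x0 s) := by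
    intro x s _
    obtain ⟨e, he⟩ := hrot x0 x
    rw [hνa _ measurableSet_ball, hνa _ measurableSet_ball, himg x0 x s e he]
    exact e.toIsometryEquiv.hausdorffMeasure_image _ _
  have B2 : ∀ x s, 0 < s → (volume : Measure (Rn (m+1))).toSphere (ball x s) =
      (volume : Measure (Rn (m+1))).toSphere (ball x0 s) := by
    intro x s _
    obtain ⟨e, he⟩ := hrot x0 x
    rw [Measure.toSphere_apply' _ measurableSet_ball, Measure.toSphere_apply' _ measurableSet_ball,
      himg x0 x s e he]
    congr 1
    have : (Ioo (0:ℝ) 1 • (e '' (Subtype.val '' ball x0 s)) : Set (Rn (m+1))) =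
        e '' (Ioo (0:ℝ) 1 • (Subtype.val '' ball x0 s)) := by
      ext z; constructor
      · rintro ⟨t, ht, _, ⟨w, hw, rfl⟩, rfl⟩
        exact ⟨t • w, ⟨t, ht, w, hw, rfl⟩, by simp⟩
      · rintro ⟨_, ⟨t, ht, w, hw, rfl⟩, rfl⟩
        exact ⟨t, ht, e w, ⟨w, hw, rfl⟩, by simp⟩
    rw [this]
    have h2 := e.symm.measurePreserving.measure_preimage_equiv
      (f := e.symm.toHomeomorph.toMeasurableEquiv) (Ioo (0:ℝ) 1 • (Subtype.val '' ball x0 s))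
    rw [← h2]
    congr 1
    exact e.toEquiv.image_eq_preimage_symm _
  haveI : Nontrivial (Rn (m+1)) := ⟨⟨x0, 0, ne_of_apply_ne Norm.norm (by
    rw [mem_sphere_zero_iff_norm.1 x0.2]; simp)⟩⟩
  obtain ⟨c, hc, h⟩ := unif_eq _ ν _ _ ⟨x0⟩ B2 B1 (Measure.toSphere_ne_zero _) hν0
  refine ⟨c, hc, ?_⟩
  rw [h, Measure.map_smul, hνmap]



noncomputable def sg (n : ℕ) : Measure (Rn n) := ((volume : Measure (Rn n)).toSphere).map Subtype.val

instance sg_finite (n : ℕ) : IsFiniteMeasure (sg n) := by unfold sg; infer_instance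

theorem Rn_nontrivial (n : ℕ) (hn : 2 ≤ n) : Nontrivial (Rn n) :=
  ⟨⟨EuclideanSpace.single ⟨0, by omega⟩ 1, 0, ne_of_apply_ne Norm.norm (by simp)⟩⟩

theorem lint_polar (n : ℕ) (hn : 2 ≤ n) (φ : ℝ → ℝ≥0∞) (hφ : Measurable φ) (Ψ : Rn n → ℝ≥0∞)
    (hΨ : Measurable Ψ) :
    ∫⁻ y : Rn n, Ψ (‖y‖⁻¹ • y) * φ ‖y‖ =
      (∫⁻ y, Ψ y ∂sg n) * ∫⁻ t in Ioi (0:ℝ), φ t * ENNReal.ofReal (t ^ ((n:ℝ) - 1)) := by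
  haveI : Nonempty (Fin n) := ⟨⟨0, by omega⟩⟩
  haveI : Nontrivial (Rn n) := Rn_nontrivial n hn
  have h1 : ∫⁻ y : Rn n, Ψ (‖y‖⁻¹ • y) * φ ‖y‖ =
      ∫⁻ y : ({(0 : Rn n)}ᶜ : Set (Rn n)), Ψ (‖(y : Rn n)‖⁻¹ • (y : Rn n)) * φ ‖(y : Rn n)‖ ∂(volume.comap Subtype.val) := by
    rw [lintegral_subtype_comap (measurableSet_singleton _).compl (fun y : Rn n => Ψ (‖y‖⁻¹ • y) * φ ‖y‖),
      restrict_compl_singleton]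
  have mp := (volume : Measure (Rn n)).measurePreserving_homeomorphUnitSphereProd
  have h2 := mp.lintegral_comp_emb (Homeomorph.measurableEmbedding _)
    (fun z => Ψ z.1 * φ z.2)
  simp only [homeomorphUnitSphereProd_apply_snd_coe, homeomorphUnitSphereProd_apply_fst_coe] at h2
  have h3 := lintegral_prod_mul (μ := (volume : Measure (Rn n)).toSphere) (ν := Measure.volumeIoiPow (Module.finrank ℝ (Rn n) - 1))
    (f := fun z => Ψ z) (g := fun z => φ z) (by fun_prop) (by fun_prop)
  rw [h1, h2, h3]
  congr 1
  · rw [sg, lintegral_map hΨ measurable_subtype_coe]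
  · rw [Measure.volumeIoiPow, lintegral_withDensity_eq_lintegral_mul _ (by fun_prop) (by fun_prop)]
    simp only [Pi.mul_apply]
    rw [lintegral_subtype_comap measurableSet_Ioi (fun t : ℝ => ENNReal.ofReal (t ^ (Module.finrank ℝ (Rn n) - 1)) * φ t)]
    refine setLIntegral_congr_fun measurableSet_Ioi fun t ht => ?_
    have : ((n:ℝ) - 1) = ((n - 1 : ℕ) : ℝ) := by push_cast [Nat.cast_sub (show 1 ≤ n by omega)]; ring
    simp [this, Real.rpow_natCast, mul_comm]

theorem int_polar_zero (n : ℕ) (hn : 2 ≤ n) (φ : ℝ → ℝ) (Ψ : Rn n → ℝ)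
    (hΨ : Measurable Ψ) (h0 : ∫ y, Ψ y ∂sg n = 0) :
    ∫ y : Rn n, Ψ (‖y‖⁻¹ • y) * φ ‖y‖ = 0 := by
  haveI : Nonempty (Fin n) := ⟨⟨0, by omega⟩⟩
  haveI : Nontrivial (Rn n) := Rn_nontrivial n hn
  have h1 : ∫ y : Rn n, Ψ (‖y‖⁻¹ • y) * φ ‖y‖ =
      ∫ y : ({(0 : Rn n)}ᶜ : Set (Rn n)), Ψ (‖(y : Rn n)‖⁻¹ • (y : Rn n)) * φ ‖(y : Rn n)‖ ∂(volume.comap Subtype.val) := by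
    rw [integral_subtype_comap (measurableSet_singleton _).compl (fun y : Rn n => Ψ (‖y‖⁻¹ • y) * φ ‖y‖),
      restrict_compl_singleton]
  have mp := (volume : Measure (Rn n)).measurePreserving_homeomorphUnitSphereProd
  have h2 := mp.integral_comp (Homeomorph.measurableEmbedding _)
    (fun z => Ψ z.1 * φ z.2)
  simp only [homeomorphUnitSphereProd_apply_snd_coe, homeomorphUnitSphereProd_apply_fst_coe] at h2
  have h3 := integral_prod_mul (μ := (volume : Measure (Rn n)).toSphere) (ν := Measure.volumeIoiPow (Module.finrank ℝ (Rn n) - 1))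
    (f := fun z => Ψ z) (g := fun z => φ z)
  rw [h1, h2, h3]
  rw [sg, integral_map measurable_subtype_coe.aemeasurable hΨ.aestronglyMeasurable] at h0
  rw [h0, zero_mul]

/-- homogeneous nonneg functions -/
def Hom (n : ℕ) (β : ℝ) (κ : Rn n → ℝ≥0∞) : Prop :=
  ∀ s : ℝ, 0 < s → ∀ w, κ (s • w) = ENNReal.ofReal (s ^ β) * κ w

theorem hom_polar (n : ℕ) (hn : 2 ≤ n) (β : ℝ) (κ : Rn n → ℝ≥0∞) (hκ : Measurable κ) (hh : Hom n β κ)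
    (φ : ℝ → ℝ≥0∞) (hφ : Measurable φ) :
    ∫⁻ y : Rn n, κ y * φ ‖y‖ =
      (∫⁻ y, κ y ∂sg n) * ∫⁻ t in Ioi (0:ℝ), φ t * ENNReal.ofReal (t ^ (β + n - 1)) := by
  haveI : Nontrivial (Rn n) := Rn_nontrivial n hn
  have h0 : ∫⁻ y : Rn n, κ y * φ ‖y‖ = ∫⁻ y : Rn n, κ (‖y‖⁻¹ • y) * (ENNReal.ofReal (‖y‖ ^ β) * φ ‖y‖) := by
    apply lintegral_congr_ae
    have : ∀ᵐ y : Rn n, y ≠ 0 := by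
      simp [ae_iff, measure_singleton]
    filter_upwards [this] with y hy
    have hp : 0 < ‖y‖ := norm_pos_iff.2 hy
    conv_lhs => rw [show y = ‖y‖ • (‖y‖⁻¹ • y) by rw [smul_smul, mul_inv_cancel₀ hp.ne', one_smul]]
    rw [hh _ hp, norm_smul, norm_smul]
    simp [hp.ne']
    ring
  rw [h0, lint_polar n hn (fun t => ENNReal.ofReal (t ^ β) * φ t) (by fun_prop) κ hκ]
  congr 1
  refine setLIntegral_congr_fun measurableSet_Ioi fun t (ht : 0 < t) => ?_
  rw [show β + n - 1 = β + (n - 1) by ring, Real.rpow_add ht, ENNReal.ofReal_mul (by positivity)]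
  ring

theorem hom_sphere_fin (n : ℕ) (hn : 2 ≤ n) (β : ℝ) (κ : Rn n → ℝ≥0∞) (hκ : Measurable κ) (hh : Hom n β κ)
    (hfin : ∫⁻ w in {w : Rn n | 1 < ‖w‖ ∧ ‖w‖ ≤ 2}, κ w < ⊤) : ∫⁻ y, κ y ∂sg n < ⊤ := by
  have hS : MeasurableSet {w : Rn n | 1 < ‖w‖ ∧ ‖w‖ ≤ 2} := by measurability
  have h := hom_polar n hn β κ hκ hh (indicator (Ioc 1 2) 1) (measurable_one.indicator measurableSet_Ioc)
  rw [← lintegral_indicator hS] at hfin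
  have e : (fun y : Rn n => κ y * indicator (Ioc 1 2) (1 : ℝ → ℝ≥0∞) ‖y‖) = {w : Rn n | 1 < ‖w‖ ∧ ‖w‖ ≤ 2}.indicator κ := by
    ext y
    by_cases hy : 1 < ‖y‖ ∧ ‖y‖ ≤ 2 <;> simp [indicator, hy]
  rw [e] at h
  rw [h] at hfin
  by_contra hc
  rw [not_lt, top_le_iff] at hc
  rw [hc, ENNReal.top_mul] at hfin
  · exact lt_irrefl _ hfin
  · rw [← pos_iff_ne_zero]
    refine (setLIntegral_pos_iff (by measurability)).2 ?_
    refine lt_of_lt_of_le ?_ (measure_mono (show Ioc (1:ℝ) 2 ⊆ _ from ?_))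
    · simp
    · intro t ht
      have h0 : (0:ℝ) < t := by linarith [ht.1]
      simp only [Function.mem_support, mem_inter_iff, mem_Ioi]
      refine ⟨?_, h0⟩
      simp only [indicator_of_mem ht, Pi.one_apply, one_mul, ne_eq, ENNReal.ofReal_eq_zero, not_le]
      positivity

theorem hom_far (n : ℕ) (hn : 2 ≤ n) (β : ℝ) (κ : Rn n → ℝ≥0∞) (hκ : Measurable κ) (hh : Hom n β κ)
    (hfin : ∫⁻ y, κ y ∂sg n < ⊤) (hβ : β + n < 0) :
    ∃ C : ℝ≥0∞, C ≠ ⊤ ∧ ∀ ρ : ℝ, 0 < ρ → ∫⁻ w in {w : Rn n | ρ < ‖w‖}, κ w ≤ C * ENNReal.ofReal (ρ ^ (β + n)) := by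
  refine ⟨(∫⁻ y, κ y ∂sg n) * ENNReal.ofReal (-(β + n))⁻¹, ENNReal.mul_ne_top hfin.ne (by simp), fun ρ hρ => ?_⟩
  have hS : MeasurableSet {w : Rn n | ρ < ‖w‖} := by measurability
  have h := hom_polar n hn β κ hκ hh (indicator (Ioi ρ) 1) (measurable_one.indicator measurableSet_Ioi)
  have e : (fun y : Rn n => κ y * indicator (Ioi ρ) (1 : ℝ → ℝ≥0∞) ‖y‖) = {w : Rn n | ρ < ‖w‖}.indicator κ := by
    ext y
    by_cases hy : ρ < ‖y‖ <;> simp [indicator, hy]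
  rw [e, lintegral_indicator hS] at h
  rw [h, mul_assoc]
  gcongr
  have e2 : (fun t : ℝ => indicator (Ioi ρ) (1 : ℝ → ℝ≥0∞) t * ENNReal.ofReal (t ^ (β + n - 1))) = (Ioi ρ).indicator (fun t : ℝ => ENNReal.ofReal (t ^ (β + n - 1))) := by
    ext t
    by_cases hy : ρ < t <;> simp [indicator, hy]
  rw [e2]
  refine (setLIntegral_le_lintegral _ _).trans ?_
  rw [lintegral_indicator measurableSet_Ioi, ← ofReal_integral_eq_lintegral_ofReal (integrableOn_Ioi_rpow_of_lt (by linarith) hρ)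
    ((ae_restrict_iff' measurableSet_Ioi).2 (ae_of_all _ fun t (ht : ρ < t) => by have : 0 < t := hρ.trans ht; simp only [Pi.zero_apply]; positivity)),
    integral_Ioi_rpow_of_lt (by linarith) hρ, ← ENNReal.ofReal_mul (inv_nonneg.2 (by linarith))]
  apply le_of_eq
  congr 1
  rw [show β + n - 1 + 1 = β + n by ring]
  field_simp

theorem hom_near (n : ℕ) (hn : 2 ≤ n) (β : ℝ) (κ : Rn n → ℝ≥0∞) (hκ : Measurable κ) (hh : Hom n β κ)
    (hfin : ∫⁻ y, κ y ∂sg n < ⊤) (hβ : 0 < β + n) :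
    ∃ C : ℝ≥0∞, C ≠ ⊤ ∧ ∀ ρ : ℝ, 0 < ρ → ∫⁻ w in {w : Rn n | ‖w‖ ≤ ρ}, κ w ≤ C * ENNReal.ofReal (ρ ^ (β + n)) := by
  refine ⟨(∫⁻ y, κ y ∂sg n) * ENNReal.ofReal ((β + n))⁻¹, ENNReal.mul_ne_top hfin.ne (by simp), fun ρ hρ => ?_⟩
  have hS : MeasurableSet {w : Rn n | ‖w‖ ≤ ρ} := by measurability
  have h := hom_polar n hn β κ hκ hh (indicator (Iic ρ) 1) (measurable_one.indicator measurableSet_Iic)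
  have e : (fun y : Rn n => κ y * indicator (Iic ρ) (1 : ℝ → ℝ≥0∞) ‖y‖) = {w : Rn n | ‖w‖ ≤ ρ}.indicator κ := by
    ext y
    by_cases hy : ‖y‖ ≤ ρ <;> simp [indicator, hy]
  rw [e, lintegral_indicator hS] at h
  rw [h, mul_assoc]
  gcongr
  have e2 : (fun t : ℝ => indicator (Iic ρ) (1 : ℝ → ℝ≥0∞) t * ENNReal.ofReal (t ^ (β + n - 1))) = (Iic ρ).indicator (fun t : ℝ => ENNReal.ofReal (t ^ (β + n - 1))) := by
    ext t
    by_cases hy : t ≤ ρ <;> simp [indicator, hy]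
  have hi : IntegrableOn (fun t : ℝ => t ^ (β + n - 1)) (Ioc 0 ρ) := 
    (intervalIntegrable_iff_integrableOn_Ioc_of_le hρ.le).1 (intervalIntegral.intervalIntegrable_rpow' (by linarith))
  rw [e2, lintegral_indicator measurableSet_Iic, Measure.restrict_restrict measurableSet_Iic, Iic_inter_Ioi]
  rw [← ofReal_integral_eq_lintegral_ofReal hi
    ((ae_restrict_iff' measurableSet_Ioc).2 (ae_of_all _ fun t ht => by have : 0 < t := ht.1; simp only [Pi.zero_apply]; positivity)),
    ← intervalIntegral.integral_of_le hρ.le,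
    integral_rpow (Or.inl (by linarith)), ← ENNReal.ofReal_mul (inv_nonneg.2 (by linarith))]
  apply le_of_eq
  congr 1
  rw [show β + n - 1 + 1 = β + n by ring, Real.zero_rpow hβ.ne']
  field_simp
  ring



theorem lor_ptwise (r m ρ s t : ℝ) (hm : 1 < m) (hρ : ρ < r) (hs : 0 ≤ s) (ht : 1 ≤ t) :
    s * t ^ (ρ - 1) ≤ t ^ (r * m) * s ^ m / t + t ^ (-1 - (r - ρ) / (m - 1)) := by
  have ht0 : 0 < t := by linarith
  set θ := (r - ρ) / (m - 1) with hθ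
  have hθm : θ * (m - 1) = r - ρ := by rw [hθ]; field_simp [show m - 1 ≠ 0 by linarith]
  by_cases h : s ≤ t ^ (-ρ - θ)
  · have : s * t ^ (ρ - 1) ≤ t ^ (-1 - θ) := by
      calc s * t ^ (ρ - 1) ≤ t ^ (-ρ - θ) * t ^ (ρ - 1) := by gcongr
        _ = t ^ (-1 - θ) := by rw [← Real.rpow_add ht0]; congr 1; ring
    have h2 : 0 ≤ t ^ (r * m) * s ^ m / t := by positivity
    linarith
  · push Not at h
    have hs0 : 0 < s := lt_of_le_of_lt (by positivity) h
    have h1 : 1 ≤ t ^ (r * m - ρ) * s ^ (m - 1) := by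
      calc 1 ≤ t ^ ((r - ρ) * (m - 1)) := Real.one_le_rpow ht (by nlinarith)
        _ = t ^ (r * m - ρ) * (t ^ (-ρ - θ)) ^ (m - 1) := by
          rw [← Real.rpow_mul ht0.le, ← Real.rpow_add ht0]; congr 1; linear_combination hθm
        _ ≤ _ := by gcongr
    have h2 : s * t ^ (ρ - 1) ≤ t ^ (r * m) * s ^ m / t := by
      calc s * t ^ (ρ - 1) ≤ (s * t ^ (ρ - 1)) * (t ^ (r * m - ρ) * s ^ (m - 1)) := le_mul_of_one_le_right (by positivity) h1
        _ = (s ^ (1:ℝ) * s ^ (m - 1)) * (t ^ (ρ - 1) * t ^ (r * m - ρ)) := by rw [Real.rpow_one]; ring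
        _ = s ^ m * t ^ (r * m - 1) := by rw [← Real.rpow_add hs0, ← Real.rpow_add ht0]; congr 2 <;> ring
        _ = _ := by rw [Real.rpow_sub ht0, Real.rpow_one]; ring
    have : 0 ≤ t ^ (-1 - θ) := by positivity
    linarith

theorem sphereMeasure_fin (n : ℕ) (hn : 2 ≤ n) : IsFiniteMeasure (sphereMeasure n) := by
  obtain ⟨m, rfl⟩ : ∃ m, n = m + 1 := ⟨n - 1, by omega⟩
  refine ⟨?_⟩
  have := haus_sphere_lt_top m
  simpa [sphereMeasure] using this

theorem lor_fin (n : ℕ) (hn : 2 ≤ n) (r rstar ρ : ℝ) (hr1 : 1 < r) (hrn : r < n)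
    (hrstar : rstar = n * r / (n - r)) (Ω : Rn n → ℝ) (hΩmeas : Measurable Ω)
    (hΩlor : lorentzSphere n r rstar Ω < ⊤) (hρ1 : 1 ≤ ρ) (hρ : ρ < r) :
    ∫⁻ y, ENNReal.ofReal (|Ω y| ^ ρ) ∂sphereMeasure n < ⊤ := by
  haveI := sphereMeasure_fin n hn
  have hnr : 0 < (n:ℝ) - r := by linarith
  set m : ℝ := n / (n - r) with hm
  have hrm : rstar = r * m := by rw [hrstar, hm]; ring
  have hm1 : 1 < m := by rw [hm, lt_div_iff₀ hnr]; linarith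
  have hmr : rstar / r = m := by rw [hrm]; field_simp
  have hrs0 : 0 < rstar := by rw [hrm]; positivity
  have hI : ∫⁻ t in Ioi (0 : ℝ),
        ENNReal.ofReal t ^ rstar * sphereMeasure n {y | t < |Ω y|} ^ (rstar / r) / ENNReal.ofReal t < ⊤ := by
    unfold lorentzSphere at hΩlor
    rw [ENNReal.rpow_lt_top_iff_of_pos (by positivity)] at hΩlor
    by_contra hc
    rw [not_lt, top_le_iff] at hc
    rw [hc, ENNReal.mul_top (by simp; linarith)] at hΩlor
    exact lt_irrefl _ hΩlor
  rw [lintegral_rpow_eq_lintegral_meas_lt_mul _ (ae_of_all _ fun y => abs_nonneg _) (by fun_prop) (by linarith)]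
  refine ENNReal.mul_lt_top (by simp) ?_
  set S : ℝ → ℝ≥0∞ := fun t => sphereMeasure n {y | t < |Ω y|} with hS
  set θ := (r - ρ) / (m - 1) with hθ
  have hθ0 : 0 < θ := div_pos (by linarith) (by linarith)
  rw [← Ioc_union_Ioi_eq_Ioi (zero_le_one' ℝ)]
  refine lt_of_le_of_lt (lintegral_union_le _ _ _) (ENNReal.add_lt_top.2 ⟨?_, ?_⟩)
  · refine lt_of_le_of_lt (lintegral_mono_ae (g := fun t => sphereMeasure n univ) ?_) ?_
    · refine (ae_restrict_iff' measurableSet_Ioc).2 (ae_of_all _ fun t ht => ?_)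
      calc _ ≤ sphereMeasure n univ * 1 := by
            gcongr
            · exact subset_univ _
            · rw [ENNReal.ofReal_le_one]; exact Real.rpow_le_one ht.1.le ht.2 (by linarith)
        _ = _ := mul_one _
    · simp [measure_lt_top]
  · have hmS : Measurable fun t : ℝ => ENNReal.ofReal (t ^ (-1 - θ)) := by fun_prop
    refine lt_of_le_of_lt (lintegral_mono_ae (g := fun t => ENNReal.ofReal t ^ rstar * S t ^ (rstar / r) / ENNReal.ofReal t + ENNReal.ofReal (t ^ (-1 - θ))) ?_) ?_
    · refine (ae_restrict_iff' measurableSet_Ioi).2 (ae_of_all _ fun t (ht : 1 < t) => ?_)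
      have ht0 : 0 < t := by linarith
      obtain ⟨s, hs⟩ : ∃ s : ℝ≥0, S t = s := ⟨(S t).toNNReal, (ENNReal.coe_toNNReal (measure_ne_top _ _)).symm⟩
      have := lor_ptwise r m ρ s t hm1 hρ s.2 ht.le
      change S t * _ ≤ _
      rw [hs, hmr, hrm, ← ENNReal.ofReal_coe_nnreal, ENNReal.ofReal_rpow_of_pos ht0, ENNReal.ofReal_rpow_of_nonneg s.coe_nonneg (show 0 ≤ m by linarith),
        ← ENNReal.ofReal_mul (by positivity), ← ENNReal.ofReal_mul (by positivity), ← ENNReal.ofReal_div_of_pos ht0,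
        ← ENNReal.ofReal_add (by positivity) (by positivity)]
      exact ENNReal.ofReal_le_ofReal this
    · rw [lintegral_add_right _ hmS, ENNReal.add_lt_top]
      refine ⟨lt_of_le_of_lt (lintegral_mono_set (Ioi_subset_Ioi zero_le_one)) hI, ?_⟩
      exact (integrableOn_Ioi_rpow_of_lt (by linarith) zero_lt_one).lintegral_lt_top

theorem sg_eq (n : ℕ) (hn : 2 ≤ n) : ∃ c : ℝ≥0∞, c ≠ ⊤ ∧ sg n = c • sphereMeasure n := toSphere_map_eq n hn

theorem lor_sg (n : ℕ) (hn : 2 ≤ n) (r rstar ρ : ℝ) (hr1 : 1 < r) (hrn : r < n)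
    (hrstar : rstar = n * r / (n - r)) (Ω : Rn n → ℝ) (hΩmeas : Measurable Ω)
    (hΩlor : lorentzSphere n r rstar Ω < ⊤) (hρ1 : 1 ≤ ρ) (hρ : ρ < r) :
    ∫⁻ y, ENNReal.ofReal (|Ω y| ^ ρ) ∂sg n < ⊤ := by
  obtain ⟨c, hc, h⟩ := sg_eq n hn
  rw [h, lintegral_smul_measure]
  exact ENNReal.mul_lt_top hc.lt_top (lor_fin n hn r rstar ρ hr1 hrn hrstar Ω hΩmeas hΩlor hρ1 hρ)

theorem mean_sg (n : ℕ) (hn : 2 ≤ n) (Ω : Rn n → ℝ) 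
    (hΩmean : ∫ y, Ω y ∂sphereMeasure n = 0) : ∫ y, Ω y ∂sg n = 0 := by
  obtain ⟨c, hc, h⟩ := sg_eq n hn
  rw [h, integral_smul_measure, hΩmean, smul_zero]



theorem Hom.rpow {n : ℕ} {β : ℝ} {κ : Rn n → ℝ≥0∞} (h : Hom n β κ) {a : ℝ} (ha : 0 ≤ a) :
    Hom n (β * a) (fun w => κ w ^ a) := by
  intro s hs w
  simp only
  rw [h s hs, ENNReal.mul_rpow_of_nonneg _ _ ha, ENNReal.ofReal_rpow_of_pos (by positivity), ← Real.rpow_mul hs.le]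

theorem Hom.mul {n : ℕ} {β γ : ℝ} {κ κ' : Rn n → ℝ≥0∞} (h : Hom n β κ) (h' : Hom n γ κ') :
    Hom n (β + γ) (fun w => κ w * κ' w) := by
  intro s hs w
  simp only
  rw [h s hs, h' s hs, Real.rpow_add hs, ENNReal.ofReal_mul (by positivity)]
  ring

theorem Hom_norm (n : ℕ) (γ : ℝ) : Hom n γ (fun w => ENNReal.ofReal (‖w‖ ^ γ)) := by
  intro s hs w
  simp only
  rw [norm_smul, Real.norm_of_nonneg hs.le, Real.mul_rpow hs.le (norm_nonneg _), ENNReal.ofReal_mul (by positivity)]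

theorem sg_mul_norm (n : ℕ) (γ : ℝ) (κ : Rn n → ℝ≥0∞) (hκ : Measurable κ) :
    ∫⁻ y, κ y * ENNReal.ofReal (‖y‖ ^ γ) ∂sg n = ∫⁻ y, κ y ∂sg n := by
  rw [sg, lintegral_map (by fun_prop) measurable_subtype_coe, lintegral_map (by fun_prop) measurable_subtype_coe]
  refine lintegral_congr fun y => ?_
  simp

theorem sg_norm (n : ℕ) (γ : ℝ) : ∫⁻ y, ENNReal.ofReal (‖y‖ ^ γ) ∂sg n < ⊤ := by
  have := sg_mul_norm n γ 1 measurable_one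
  simp only [Pi.one_apply, one_mul] at this
  rw [this]
  simp [measure_lt_top]

theorem rpow_le_one_add (x : ℝ≥0∞) {b a : ℝ} (hb : 0 ≤ b) (hba : b ≤ a) : x ^ b ≤ 1 + x ^ a := by
  rcases le_total x 1 with h | h
  · exact (ENNReal.rpow_le_one h hb).trans le_self_add
  · exact (ENNReal.rpow_le_rpow_of_exponent_le h hba).trans le_add_self

theorem sg_rpow_fin {n : ℕ} {κ : Rn n → ℝ≥0∞} {a b : ℝ} (hb : 0 ≤ b) (hba : b ≤ a)
    (h : ∫⁻ y, κ y ^ a ∂sg n < ⊤) : ∫⁻ y, κ y ^ b ∂sg n < ⊤ := by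
  refine lt_of_le_of_lt (lintegral_mono fun y => rpow_le_one_add (κ y) hb hba) ?_
  rw [lintegral_add_left measurable_const]
  exact ENNReal.add_lt_top.2 ⟨by simp [measure_lt_top], h⟩

theorem scalar_hls (C3 e q : ℝ) (hC3 : 0 < C3) (he : 0 < e) (hq : 1 < q) :
    ∃ C4 : ℝ≥0∞, C4 ≠ ⊤ ∧ ∀ (v : ℝ≥0∞) (u : ℝ → ℝ≥0∞),
      (∀ δ : ℝ, 0 < δ → v ≤ ENNReal.ofReal (C3 * δ ^ (-e)) + u δ) →
      v ^ q ≤ C4 * ∫⁻ δ in Ioi (0:ℝ), ENNReal.ofReal (δ ^ (-e * (q - 1) - 1)) * u δ := by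
  have hk : 0 < e * (q - 1) := mul_pos he (by linarith)
  have hInt : ∀ δ0 : ℝ, 0 < δ0 → ∫⁻ δ in Ioi δ0, ENNReal.ofReal (δ ^ (-e * (q - 1) - 1)) = ENNReal.ofReal (δ0 ^ (-(e * (q - 1))) / (e * (q - 1))) := by
    intro δ0 h0
    rw [← ofReal_integral_eq_lintegral_ofReal (integrableOn_Ioi_rpow_of_lt (by linarith) h0)
      ((ae_restrict_iff' measurableSet_Ioi).2 (ae_of_all _ fun t (ht : δ0 < t) => by have : 0 < t := h0.trans ht; simp only [Pi.zero_apply]; positivity)),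
      integral_Ioi_rpow_of_lt (by linarith) h0]
    congr 1
    rw [show -e * (q - 1) - 1 + 1 = -(e * (q - 1)) by ring, neg_div_neg_eq]
  refine ⟨ENNReal.ofReal (2 * (e * (q - 1)) * (2 * C3) ^ (q - 1)), by simp, fun v u h => ?_⟩
  rcases eq_or_ne v 0 with rfl | hv0
  · rw [ENNReal.zero_rpow_of_pos (by linarith)]; exact zero_le
  rcases eq_or_ne v ⊤ with rfl | hvt
  · have hu : ∀ δ ∈ Ioi (0:ℝ), ENNReal.ofReal (δ ^ (-e * (q - 1) - 1)) * u δ = ⊤ := by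
      intro δ hδ
      have hδ' : 0 < δ := hδ
      have := h δ hδ
      rw [top_le_iff, ENNReal.add_eq_top] at this
      rcases this with h | h
      · simp at h
      · rw [h, ENNReal.mul_top]; simp; positivity
    rw [setLIntegral_congr_fun measurableSet_Ioi hu]
    simp only [lintegral_const, MeasurableSet.univ, Measure.restrict_apply, univ_inter, Real.volume_Ioi]
    rw [ENNReal.mul_top (by simp), ENNReal.mul_top]
    · exact le_top
    · simp only [ne_eq, ENNReal.ofReal_eq_zero, not_le]; positivity
  lift v to ℝ≥0 using hvt
  have hv : (0:ℝ) < v := by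
    have : v ≠ 0 := by simpa using hv0
    positivity
  set δ0 : ℝ := (v / (2 * C3)) ^ (-1 / e) with hδ0
  have hδ0p : 0 < δ0 := by positivity
  have key : ∀ δ ∈ Ioi δ0, ENNReal.ofReal (v / 2) ≤ u δ := by
    intro δ hδ
    have hδ' : δ0 < δ := hδ
    have hδp : 0 < δ := hδ0p.trans hδ'
    have h1 := h δ hδp
    have h2 : δ ^ (-e) ≤ v / (2 * C3) := by
      calc δ ^ (-e) ≤ δ0 ^ (-e) := Real.rpow_le_rpow_of_nonpos hδ0p hδ'.le (by linarith)
        _ = v / (2 * C3) := by rw [hδ0, ← Real.rpow_mul (by positivity), show -1 / e * -e = 1 by field_simp, Real.rpow_one]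
    have h3 : C3 * δ ^ (-e) ≤ v / 2 := by
      calc C3 * δ ^ (-e) ≤ C3 * (v / (2 * C3)) := by gcongr
        _ = v / 2 := by field_simp
    have h4 : (v : ℝ≥0∞) = ENNReal.ofReal (v / 2) + ENNReal.ofReal (v / 2) := by
      rw [← ENNReal.ofReal_add (by positivity) (by positivity), add_halves, ENNReal.ofReal_coe_nnreal]
    have h5 : ENNReal.ofReal (v / 2) + ENNReal.ofReal (v / 2) ≤ ENNReal.ofReal (v / 2) + u δ := by
      rw [← h4]; exact h1.trans (by gcongr)
    exact (ENNReal.add_le_add_iff_left ENNReal.ofReal_ne_top).1 h5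
  calc (v : ℝ≥0∞) ^ q = ENNReal.ofReal (2 * (e * (q - 1)) * (2 * C3) ^ (q - 1)) * (ENNReal.ofReal (δ0 ^ (-(e * (q - 1))) / (e * (q - 1))) * ENNReal.ofReal (v / 2)) := by
        rw [← ENNReal.ofReal_mul (by positivity), ← ENNReal.ofReal_mul (by positivity), ← ENNReal.ofReal_coe_nnreal, ENNReal.ofReal_rpow_of_pos hv]
        congr 1
        have h6 : δ0 ^ (-(e * (q - 1))) = (v / (2 * C3)) ^ (q - 1) := by
          rw [hδ0, ← Real.rpow_mul (by positivity)]; congr 1; field_simp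
        rw [h6, Real.div_rpow hv.le (by positivity), Real.rpow_sub_one hv.ne']
        have : (2 * C3) ^ (q - 1) ≠ 0 := by positivity
        have hq1 : q - 1 ≠ 0 := by linarith
        field_simp
    _ ≤ _ := by
        gcongr
        rw [← hInt δ0 hδ0p, ← lintegral_mul_const _ (by fun_prop)]
        refine (setLIntegral_mono' measurableSet_Ioi (g := fun δ => ENNReal.ofReal (δ ^ (-e * (q - 1) - 1)) * u δ) fun δ hδ => ?_).trans (lintegral_mono_set (Ioi_subset_Ioi hδ0p.le))
        gcongr
        exact key δ hδ



theorem lint_Ioi_rpow (k δ0 : ℝ) (hk : 0 < k) (h0 : 0 < δ0) :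
    ∫⁻ δ in Ioi δ0, ENNReal.ofReal (δ ^ (-k - 1)) = ENNReal.ofReal (δ0 ^ (-k) / k) := by
  rw [← ofReal_integral_eq_lintegral_ofReal (integrableOn_Ioi_rpow_of_lt (by linarith) h0)
      ((ae_restrict_iff' measurableSet_Ioi).2 (ae_of_all _ fun t (ht : δ0 < t) => by have : 0 < t := h0.trans ht; simp only [Pi.zero_apply]; positivity)),
      integral_Ioi_rpow_of_lt (by linarith) h0]
  congr 1
  rw [show -k - 1 + 1 = -k by ring, neg_div_neg_eq]

theorem hls_level (N p : ℝ) (hN : 0 < N) (hp : 1 < p) :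
    ∃ C : ℝ≥0∞, C ≠ ⊤ ∧ ∀ g : ℝ≥0∞, g ≠ ⊤ →
      ∫⁻ δ in Ioi (0:ℝ), ENNReal.ofReal (δ ^ (-(N - N / p) - 1)) *
        (Ioi (0:ℝ)).indicator (fun _ => {h : ℝ≥0∞ | ENNReal.ofReal (δ ^ (-(N / p))) < h}.indicator id g) δ ≤ C * g ^ p := by
  have hk : 0 < N - N / p := by
    have : N / p < N := div_lt_self hN hp
    linarith
  refine ⟨ENNReal.ofReal (1 / (N - N / p)), by simp, fun g hg => ?_⟩
  lift g to ℝ≥0 using hg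
  rcases eq_or_ne g 0 with rfl | hg0
  · simp [ENNReal.zero_rpow_of_pos (show 0 < p by linarith)]
  have hgp : (0:ℝ) < g := by positivity
  set δ0 : ℝ := (g:ℝ) ^ (-(p / N)) with hδ0
  have hδ0p : 0 < δ0 := by positivity
  have h1 : ∀ δ ∈ Ioi (0:ℝ), ENNReal.ofReal (δ ^ (-(N - N / p) - 1)) *
        (Ioi (0:ℝ)).indicator (fun _ => {h : ℝ≥0∞ | ENNReal.ofReal (δ ^ (-(N / p))) < h}.indicator id (g:ℝ≥0∞)) δ ≤
        (Ioi δ0).indicator (fun δ => ENNReal.ofReal (δ ^ (-(N - N / p) - 1)) * g) δ := by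
    intro δ hδ
    have hδp : 0 < δ := hδ
    rw [indicator_of_mem hδ]
    by_cases h : ENNReal.ofReal (δ ^ (-(N / p))) < g
    · have : δ ∈ Ioi δ0 := by
        rw [← ENNReal.ofReal_coe_nnreal, ENNReal.ofReal_lt_ofReal_iff hgp] at h
        have := Real.rpow_lt_rpow_of_neg (by positivity) h (show -(p / N) < 0 by simp; positivity)
        rw [← Real.rpow_mul hδp.le, show -(N / p) * -(p / N) = 1 by field_simp, Real.rpow_one] at this
        exact this
      rw [indicator_of_mem this, indicator_of_mem (by exact h)]
      rfl
    · rw [indicator_of_notMem (by exact h)]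
      simp
  refine (setLIntegral_mono' measurableSet_Ioi h1).trans ((setLIntegral_le_lintegral _ _).trans ?_)
  rw [lintegral_indicator measurableSet_Ioi, lintegral_mul_const _ (by fun_prop), lint_Ioi_rpow _ _ hk hδ0p]
  rw [← ENNReal.ofReal_coe_nnreal, ENNReal.ofReal_rpow_of_pos hgp, ← ENNReal.ofReal_mul (by positivity), ← ENNReal.ofReal_mul (by positivity)]
  apply le_of_eq
  congr 1
  have h2 : δ0 ^ (-(N - N / p)) = (g:ℝ) ^ (p - 1) := by
    rw [hδ0, ← Real.rpow_mul hgp.le]; congr 1; field_simp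
  rw [h2, Real.rpow_sub_one hgp.ne']
  field_simp

theorem hls_point (n : ℕ) (hn : 2 ≤ n) (α p p' q : ℝ) (hα : 0 < α) (hpp : p'.HolderConjugate p) (hq0 : 0 < q)
    (hq : 1 / q = 1 / p - α / n) (K : Rn n → ℝ≥0∞) (hK : Measurable K) (hKh : Hom n (α - n) K)
    (hKp : ∫⁻ w, K w ^ p' ∂sg n < ⊤) :
    ∃ C3 : ℝ, 0 < C3 ∧ ∀ G : Rn n → ℝ≥0∞, Measurable G → ∫⁻ y, G y ^ p ≤ 1 → ∀ x, ∀ δ : ℝ, 0 < δ →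
      ∫⁻ y, K (x - y) * G y ≤ ENNReal.ofReal (C3 * δ ^ (-(n / q))) +
        ∫⁻ y, {w : Rn n | ‖w‖ ≤ δ}.indicator K (x - y) *
          {h : ℝ≥0∞ | ENNReal.ofReal (δ ^ (-(n / p))) < h}.indicator id (G y) := by
  have hn0 : (0:ℝ) < n := by positivity
  have hp1 := hpp.symm.lt
  have hp'1 := hpp.lt
  have hconj := hpp.inv_add_inv_eq_one
  have e1 : (α - n) * p' + n = p' * (-(n / q)) := by
    rw [div_eq_mul_one_div (n:ℝ) q, hq]
    have : (1 / p : ℝ) = 1 - 1 / p' := by rw [one_div, one_div]; linarith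
    rw [this]; field_simp; ring
  have e2 : α = n / p - n / q := by
    rw [div_eq_mul_one_div (n:ℝ) q, hq]; field_simp; ring
  have hnq : 0 < n / q := by positivity
  obtain ⟨Cf, hCf, hfar⟩ := hom_far n hn ((α - n) * p') (fun w => K w ^ p') (by fun_prop) (hKh.rpow (by linarith)) hKp
    (by rw [e1]; nlinarith)
  have hK1 : ∫⁻ w, K w ∂sg n < ⊤ := by
    simpa using sg_rpow_fin (b := 1) zero_le_one hp'1.le hKp
  obtain ⟨Cn, hCn, hnear⟩ := hom_near n hn (α - n) K hK hKh hK1 (by linarith)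
  rw [sub_add_cancel] at hnear
  set CC := Cf ^ (1 / p') + Cn with hCC
  have hCCt : CC ≠ ⊤ := ENNReal.add_ne_top.2 ⟨ENNReal.rpow_ne_top_of_nonneg (by positivity) hCf, hCn⟩
  refine ⟨CC.toReal + 1, by positivity, fun G hG hG1 x δ hδ => ?_⟩
  set s := {h : ℝ≥0∞ | ENNReal.ofReal (δ ^ (-(n / p))) < h} with hs
  have hsm : MeasurableSet s := measurableSet_Ioi
  set A := {w : Rn n | ‖w‖ ≤ δ} with hA
  have hAm : MeasurableSet A := by rw [hA]; measurability
  set B := {w : Rn n | δ < ‖w‖} with hB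
  have hBm : MeasurableSet B := by rw [hB]; measurability
  have hsplit : ∀ y, K (x - y) * G y ≤ B.indicator K (x - y) * G y + (A.indicator K (x - y) * ENNReal.ofReal (δ ^ (-(n / p))) + A.indicator K (x - y) * s.indicator id (G y)) := by
    intro y
    by_cases h1 : ‖x - y‖ ≤ δ
    · have h1A : x - y ∈ A := h1
      rw [indicator_of_mem h1A]
      by_cases h2 : G y ∈ s
      · rw [indicator_of_mem h2]; exact le_add_left (le_add_left le_rfl)
      · refine le_add_left (le_add_right ?_)
        gcongr
        exact not_lt.1 h2
    · have h1B : x - y ∈ B := not_le.1 h1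
      rw [indicator_of_mem h1B]; exact le_self_add
  have mB : Measurable fun y => B.indicator K (x - y) := (hK.indicator hBm).comp (by fun_prop)
  have mA : Measurable fun y => A.indicator K (x - y) := (hK.indicator hAm).comp (by fun_prop)
  refine (lintegral_mono hsplit).trans ?_
  rw [lintegral_add_left (by fun_prop), lintegral_add_left (by fun_prop), ← add_assoc]
  gcongr
  have i1 : ∫⁻ y, B.indicator K (x - y) * G y ≤ Cf ^ (1 / p') * ENNReal.ofReal (δ ^ (-(n / q))) := by
    refine (ENNReal.lintegral_mul_le_Lp_mul_Lq _ hpp mB.aemeasurable hG.aemeasurable).trans ?_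
    calc _ ≤ (Cf * ENNReal.ofReal (δ ^ (p' * (-(n / q))))) ^ (1 / p') * 1 := by
          gcongr
          · rw [lintegral_sub_left_eq_self (fun w => B.indicator K w ^ p') x, ← e1]
            refine le_trans (le_of_eq ?_) (hfar δ hδ)
            rw [← lintegral_indicator hBm]
            refine lintegral_congr fun w => ?_
            by_cases h : w ∈ B
            · simp [h]
            · simp [h, ENNReal.zero_rpow_of_pos (show 0 < p' by linarith)]
          · exact ENNReal.rpow_le_one hG1 (by positivity)
      _ = _ := by
          rw [mul_one, ENNReal.mul_rpow_of_nonneg _ _ (by positivity), ENNReal.ofReal_rpow_of_pos (by positivity), ← Real.rpow_mul hδ.le]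
          congr 3
          field_simp
  have i2 : ∫⁻ y, A.indicator K (x - y) * ENNReal.ofReal (δ ^ (-(n / p))) ≤ Cn * ENNReal.ofReal (δ ^ (-(n / q))) := by
    rw [lintegral_mul_const _ mA, lintegral_sub_left_eq_self (fun w => A.indicator K w) x, lintegral_indicator hAm]
    calc _ ≤ (Cn * ENNReal.ofReal (δ ^ α)) * ENNReal.ofReal (δ ^ (-(n / p))) := by gcongr; exact hnear δ hδ
      _ = _ := by
        rw [mul_assoc, ← ENNReal.ofReal_mul (by positivity), ← Real.rpow_add hδ]
        congr 3
        linarith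
  refine (add_le_add i1 i2).trans ?_
  rw [← add_mul, ← hCC, ENNReal.ofReal_mul (by positivity)]
  gcongr
  rw [ENNReal.ofReal_add (by positivity) zero_le_one, ENNReal.ofReal_toReal hCCt]
  exact le_self_add

theorem hls (n : ℕ) (hn : 2 ≤ n) (α p p' q : ℝ) (hα : 0 < α) (hpp : p'.HolderConjugate p) (hq1 : 1 < q)
    (hq : 1 / q = 1 / p - α / n) (K : Rn n → ℝ≥0∞) (hK : Measurable K) (hKh : Hom n (α - n) K)
    (hKp : ∫⁻ w, K w ^ p' ∂sg n < ⊤) :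
    ∃ C : ℝ≥0∞, C ≠ ⊤ ∧ ∀ G : Rn n → ℝ≥0∞, Measurable G → (∀ y, G y ≠ ⊤) → ∫⁻ y, G y ^ p ≤ 1 →
      ∫⁻ x, (∫⁻ y, K (x - y) * G y) ^ q ≤ C := by
  have hq0 : 0 < q := by linarith
  have hn0 : (0:ℝ) < n := by positivity
  have hp1 := hpp.symm.lt
  obtain ⟨C3, hC3, hpt⟩ := hls_point n hn α p p' q hα hpp hq0 hq K hK hKh hKp
  obtain ⟨C4, hC4, hsc⟩ := scalar_hls C3 (n / q) q hC3 (by positivity) hq1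
  have hK1 : ∫⁻ w, K w ∂sg n < ⊤ := by
    simpa using sg_rpow_fin (b := 1) zero_le_one hpp.lt.le hKp
  obtain ⟨Cn, hCn, hnear⟩ := hom_near n hn (α - n) K hK hKh hK1 (by linarith)
  rw [sub_add_cancel] at hnear
  obtain ⟨C5, hC5, hlev⟩ := hls_level n p hn0 hp1
  refine ⟨C4 * (Cn * C5), ENNReal.mul_ne_top hC4 (ENNReal.mul_ne_top hCn hC5), fun G hG hGt hG1 => ?_⟩
  set φ : ℝ → ℝ≥0∞ := fun δ => ENNReal.ofReal (δ ^ (-(n / q) * (q - 1) - 1)) with hφ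
  set KN : ℝ → Rn n → ℝ≥0∞ := fun δ => {w : Rn n | ‖w‖ ≤ δ}.indicator K with hKN
  set GG : ℝ → Rn n → ℝ≥0∞ := fun δ y => {h : ℝ≥0∞ | ENNReal.ofReal (δ ^ (-(n / p))) < h}.indicator id (G y) with hGG
  have mφ : Measurable φ := by fun_prop
  have mKN : Measurable (fun z : ℝ × Rn n => KN z.1 z.2) := by
    have : (fun z : ℝ × Rn n => KN z.1 z.2) = {z : ℝ × Rn n | ‖z.2‖ ≤ z.1}.indicator (fun z => K z.2) := by
      ext z; simp [hKN, indicator]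
    rw [this]
    exact (hK.comp measurable_snd).indicator (measurableSet_le (by fun_prop) (by fun_prop))
  have mGG : Measurable (fun z : ℝ × Rn n => GG z.1 z.2) := by
    have : (fun z : ℝ × Rn n => GG z.1 z.2) = {z : ℝ × Rn n | ENNReal.ofReal (z.1 ^ (-(n / p))) < G z.2}.indicator (fun z => G z.2) := by
      ext z; simp [hGG, indicator]
    rw [this]
    exact (hG.comp measurable_snd).indicator (measurableSet_lt (by fun_prop) (by fun_prop))
  have m3 : Measurable (fun z : (Rn n × ℝ) × Rn n => KN z.1.2 (z.1.1 - z.2) * GG z.1.2 z.2) :=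
    (mKN.comp (g := fun z : ℝ × Rn n => KN z.1 z.2) (f := fun z : (Rn n × ℝ) × Rn n => (z.1.2, z.1.1 - z.2)) (by fun_prop)).mul
      (mGG.comp (g := fun z : ℝ × Rn n => GG z.1 z.2) (f := fun z : (Rn n × ℝ) × Rn n => (z.1.2, z.2)) (by fun_prop))
  have mu : Measurable (fun z : Rn n × ℝ => ∫⁻ y, KN z.2 (z.1 - y) * GG z.2 y) := m3.lintegral_prod_right'
  have step1 : ∫⁻ x, (∫⁻ y, K (x - y) * G y) ^ q ≤ ∫⁻ x, C4 * ∫⁻ δ in Ioi (0:ℝ), φ δ * ∫⁻ y, KN δ (x - y) * GG δ y := by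
    refine lintegral_mono fun x => ?_
    exact hsc _ (fun δ => ∫⁻ y, KN δ (x - y) * GG δ y) (fun δ hδ => hpt G hG hG1 x δ hδ)
  refine step1.trans ?_
  rw [lintegral_const_mul' _ _ hC4]
  gcongr
  rw [lintegral_lintegral_swap (by
    apply Measurable.aemeasurable
    exact (mφ.comp measurable_snd).mul mu)]
  have step2 : ∀ δ ∈ Ioi (0:ℝ), ∫⁻ x, φ δ * ∫⁻ y, KN δ (x - y) * GG δ y ≤ ∫⁻ y, Cn * (ENNReal.ofReal (δ ^ (-((n:ℝ) - n / p) - 1)) * (Ioi (0:ℝ)).indicator (fun _ => GG δ y) δ) := by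
    intro δ hδ
    have hδp : 0 < δ := hδ
    have mK1 : Measurable (KN δ) := mKN.comp (g := fun z : ℝ × Rn n => KN z.1 z.2) (f := fun w => (δ, w)) (by fun_prop)
    have mG1 : Measurable (GG δ) := mGG.comp (g := fun z : ℝ × Rn n => GG z.1 z.2) (f := fun w => (δ, w)) (by fun_prop)
    rw [lintegral_const_mul' _ _ (by simp [hφ]), lintegral_lintegral_swap (by
      apply Measurable.aemeasurable
      exact (mK1.comp (by fun_prop)).mul (mG1.comp measurable_snd)), ← lintegral_const_mul' _ _ (by simp [hφ])]
    refine lintegral_mono fun y => ?_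
    rw [indicator_of_mem hδ, lintegral_mul_const _ (show Measurable fun x => KN δ (x - y) by fun_prop), lintegral_sub_right_eq_self (KN δ) y]
    have : ∫⁻ w, KN δ w ≤ Cn * ENNReal.ofReal (δ ^ α) := by
      rw [hKN]
      simp only
      rw [lintegral_indicator (measurableSet_le (by fun_prop) (by fun_prop))]
      exact hnear δ hδp
    calc φ δ * ((∫⁻ w, KN δ w) * GG δ y) ≤ φ δ * (Cn * ENNReal.ofReal (δ ^ α) * GG δ y) := by gcongr
      _ = Cn * ((ENNReal.ofReal (δ ^ α) * φ δ) * GG δ y) := by ring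
      _ = _ := by
        rw [hφ]
        simp only
        rw [← ENNReal.ofReal_mul (by positivity), ← Real.rpow_add hδp]
        congr 4
        have : (n / q : ℝ) = n / p - α := by rw [div_eq_mul_one_div (n:ℝ) q, hq]; field_simp
        have h2 : (n / q : ℝ) * q = n := by field_simp
        linear_combination h2 * (-1) + this
  refine (setLIntegral_mono' measurableSet_Ioi step2).trans ?_
  rw [lintegral_lintegral_swap]
  · calc _ ≤ ∫⁻ y, Cn * (C5 * G y ^ p) := by
          refine lintegral_mono fun y => ?_
          rw [lintegral_const_mul' _ _ hCn]
          gcongr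
          exact hlev (G y) (hGt y)
      _ ≤ Cn * C5 := by
          rw [lintegral_const_mul' _ _ hCn, lintegral_const_mul' _ _ hC5]
          gcongr
          calc C5 * _ ≤ C5 * 1 := by gcongr
            _ = C5 := mul_one _
  · apply Measurable.aemeasurable
    refine measurable_const.mul (Measurable.mul (by fun_prop) ?_)
    have : (fun z : ℝ × Rn n => (Ioi (0:ℝ)).indicator (fun _ => GG z.1 z.2) z.1) = {z : ℝ × Rn n | 0 < z.1}.indicator (fun z => GG z.1 z.2) := by
      ext z; simp [indicator]
    rw [this]
    exact mGG.indicator (measurableSet_lt (by fun_prop) (by fun_prop))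



theorem ae_ne_zero (n : ℕ) (hn : 2 ≤ n) : ∀ᵐ y : Rn n, y ≠ 0 := by
  haveI : Nontrivial (Rn n) := Rn_nontrivial n hn
  simp [ae_iff, measure_singleton]

theorem lemH_x (n : ℕ) (hn : 2 ≤ n) (p e : ℝ) (hp : 0 < p) (he : e ≠ 0) :
    ∃ C : ℝ≥0∞, C ≠ ⊤ ∧ ∀ y : Rn n, y ≠ 0 →
      ∫⁻ x in {x : Rn n | ‖y‖ ^ e ≤ (2 * ‖x‖) ^ e}, ENNReal.ofReal (‖x‖ ^ (-n - e * p)) ≤ C * ENNReal.ofReal (‖y‖ ^ (-(e * p))) := by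
  rcases lt_or_gt_of_ne he with he | he
  · obtain ⟨C, hC, h⟩ := hom_near n hn (-n - e * p) _ (by fun_prop) (Hom_norm n _) (sg_norm n _) (by nlinarith)
    refine ⟨C * ENNReal.ofReal ((1/2) ^ (-n - e * p + n)), ENNReal.mul_ne_top hC (by simp), fun y hy => ?_⟩
    have hy0 : 0 < ‖y‖ := norm_pos_iff.2 hy
    refine (lintegral_mono_set ?_).trans ((h (1 / 2 * ‖y‖) (by positivity)).trans (le_of_eq ?_))
    · intro x hx
      simp only [mem_setOf_eq] at hx ⊢
      by_contra hc
      push Not at hc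
      have := Real.rpow_lt_rpow_of_neg hy0 (show ‖y‖ < 2 * ‖x‖ by linarith) he
      linarith
    · rw [Real.mul_rpow (by norm_num) (norm_nonneg _), ENNReal.ofReal_mul (by positivity), mul_assoc]
      congr 4
      ring
  · obtain ⟨C, hC, h⟩ := hom_far n hn (-n - e * p) _ (by fun_prop) (Hom_norm n _) (sg_norm n _) (by nlinarith)
    refine ⟨C * ENNReal.ofReal ((1/4) ^ (-n - e * p + n)), ENNReal.mul_ne_top hC (by simp), fun y hy => ?_⟩
    have hy0 : 0 < ‖y‖ := norm_pos_iff.2 hy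
    refine (lintegral_mono_set ?_).trans ((h (1 / 4 * ‖y‖) (by positivity)).trans (le_of_eq ?_))
    · intro x hx
      simp only [mem_setOf_eq] at hx ⊢
      have := (Real.rpow_le_rpow_iff hy0.le (by positivity) he).1 hx
      linarith
    · rw [Real.mul_rpow (by norm_num) (norm_nonneg _), ENNReal.ofReal_mul (by positivity), mul_assoc]
      congr 4
      ring

theorem lemH (n : ℕ) (hn : 2 ≤ n) (p q e : ℝ) (hp : 1 ≤ p) (hpq : p ≤ q) (he : e ≠ 0) (C0 : ℝ≥0∞) (hC0 : C0 ≠ ⊤) :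
    ∃ C : ℝ≥0∞, C ≠ ⊤ ∧ ∀ G : Rn n → ℝ≥0∞, Measurable G → ∫⁻ y, G y ^ p ≤ 1 → ∀ V : Rn n → ℝ≥0∞,
      (∀ x, x ≠ 0 → V x ≤ C0 * ENNReal.ofReal (‖x‖ ^ (-(n / q) - e)) *
        (∫⁻ y in {y : Rn n | ‖y‖ ^ e ≤ (2 * ‖x‖) ^ e}, ENNReal.ofReal (‖y‖ ^ (e * p)) * G y ^ p) ^ (1 / p)) →
      ∫⁻ x, V x ^ q ≤ C := by
  have hp0 : 0 < p := by linarith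
  have hq0 : 0 < q := by linarith
  obtain ⟨C1, hC1, hx1⟩ := lemH_x n hn p e hp0 he
  have ht : C0 ^ q * ENNReal.ofReal (2 ^ (e * (q - p))) ≠ ⊤ := ENNReal.mul_ne_top (ENNReal.rpow_ne_top_of_nonneg hq0.le hC0) (by simp)
  refine ⟨C0 ^ q * ENNReal.ofReal (2 ^ (e * (q - p))) * C1, ENNReal.mul_ne_top ht hC1, fun G hG hG1 V hV => ?_⟩
  set S : Set (Rn n × Rn n) := {z | ‖z.2‖ ^ e ≤ (2 * ‖z.1‖) ^ e} with hS
  have hSm : MeasurableSet S := measurableSet_le (by fun_prop) (by fun_prop)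
  set F : Rn n × Rn n → ℝ≥0∞ := S.indicator (fun z => ENNReal.ofReal (‖z.2‖ ^ (e * p)) * G z.2 ^ p) with hF
  have hFm : Measurable F := Measurable.indicator (by fun_prop) hSm
  have hJ : ∀ x, ∫⁻ y in {y : Rn n | ‖y‖ ^ e ≤ (2 * ‖x‖) ^ e}, ENNReal.ofReal (‖y‖ ^ (e * p)) * G y ^ p = ∫⁻ y, F (x, y) := by
    intro x
    rw [← lintegral_indicator (measurableSet_le (by fun_prop) (by fun_prop))]
    refine lintegral_congr fun y => ?_
    simp [hF, hS, indicator]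
  have hJle : ∀ x, ∫⁻ y, F (x, y) ≤ ENNReal.ofReal ((2 * ‖x‖) ^ (e * p)) := by
    intro x
    calc ∫⁻ y, F (x, y) ≤ ∫⁻ y, ENNReal.ofReal ((2 * ‖x‖) ^ (e * p)) * G y ^ p := by
          refine lintegral_mono fun y => ?_
          by_cases h : (x, y) ∈ S
          · simp only [hF, indicator_of_mem h]
            refine mul_le_mul_left (ENNReal.ofReal_le_ofReal ?_) _
            rw [Real.rpow_mul (by positivity), Real.rpow_mul (by positivity)]
            exact Real.rpow_le_rpow (by positivity) h hp0.le
          · simp only [hF, indicator_of_notMem h]; exact zero_le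
      _ = ENNReal.ofReal ((2 * ‖x‖) ^ (e * p)) * ∫⁻ y, G y ^ p := lintegral_const_mul' _ _ (by simp)
      _ ≤ _ := mul_le_of_le_one_right zero_le hG1
  have hVq : ∀ x, x ≠ 0 → V x ^ q ≤ C0 ^ q * ENNReal.ofReal (2 ^ (e * (q - p))) * (ENNReal.ofReal (‖x‖ ^ (-n - e * p)) * ∫⁻ y, F (x, y)) := by
    intro x hx
    have hx0 : 0 < ‖x‖ := norm_pos_iff.2 hx
    have h1 := hV x hx
    rw [hJ] at h1
    set J := ∫⁻ y, F (x, y) with hJd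
    have h2 : J ^ (q / p) ≤ J * ENNReal.ofReal ((2 * ‖x‖) ^ (e * (q - p))) := by
      calc J ^ (q / p) = J ^ (1 + (q / p - 1)) := by congr 1; ring
        _ = J * J ^ (q / p - 1) := by
          rw [ENNReal.rpow_add_of_nonneg _ _ zero_le_one (by rw [sub_nonneg, le_div_iff₀ hp0]; linarith), ENNReal.rpow_one]
        _ ≤ J * ENNReal.ofReal ((2 * ‖x‖) ^ (e * p)) ^ (q / p - 1) := by
          gcongr
          · rw [sub_nonneg, le_div_iff₀ hp0]; linarith
          · exact hJle x
        _ = _ := by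
          rw [ENNReal.ofReal_rpow_of_pos (by positivity), ← Real.rpow_mul (by positivity)]
          congr 3
          field_simp
    calc V x ^ q ≤ (C0 * ENNReal.ofReal (‖x‖ ^ (-(n / q) - e)) * J ^ (1 / p)) ^ q := by gcongr
      _ = C0 ^ q * ENNReal.ofReal (‖x‖ ^ (-n - e * q)) * J ^ (q / p) := by
        rw [ENNReal.mul_rpow_of_nonneg _ _ hq0.le, ENNReal.mul_rpow_of_nonneg _ _ hq0.le, ENNReal.ofReal_rpow_of_pos (by positivity),
          ← Real.rpow_mul hx0.le, ← ENNReal.rpow_mul]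
        rw [show (-(n / q) - e) * q = -n - e * q by field_simp, show 1 / p * q = q / p by ring]
      _ ≤ C0 ^ q * ENNReal.ofReal (‖x‖ ^ (-n - e * q)) * (J * ENNReal.ofReal ((2 * ‖x‖) ^ (e * (q - p)))) := by gcongr
      _ = C0 ^ q * (ENNReal.ofReal ((2 * ‖x‖) ^ (e * (q - p))) * ENNReal.ofReal (‖x‖ ^ (-n - e * q))) * J := by ring
      _ = _ := by
        rw [Real.mul_rpow (by norm_num) hx0.le, ENNReal.ofReal_mul (by positivity), mul_assoc (ENNReal.ofReal (2 ^ _)), ← ENNReal.ofReal_mul (by positivity), ← Real.rpow_add hx0]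
        rw [show e * (q - p) + (-n - e * q) = -n - e * p by ring]
        ring
  calc ∫⁻ x, V x ^ q ≤ ∫⁻ x, C0 ^ q * ENNReal.ofReal (2 ^ (e * (q - p))) * (ENNReal.ofReal (‖x‖ ^ (-n - e * p)) * ∫⁻ y, F (x, y)) := by
        apply lintegral_mono_ae
        filter_upwards [ae_ne_zero n hn] with x hx using hVq x hx
    _ = C0 ^ q * ENNReal.ofReal (2 ^ (e * (q - p))) * ∫⁻ x, ∫⁻ y, ENNReal.ofReal (‖x‖ ^ (-n - e * p)) * F (x, y) := by
        rw [lintegral_const_mul' _ _ ht]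
        congr 1
        refine lintegral_congr fun x => ?_
        rw [lintegral_const_mul' _ _ (by simp)]
    _ ≤ C0 ^ q * ENNReal.ofReal (2 ^ (e * (q - p))) * C1 := by
        gcongr
        rw [lintegral_lintegral_swap (by
          apply Measurable.aemeasurable
          exact Measurable.mul (by fun_prop) hFm)]
        calc _ ≤ ∫⁻ y, C1 * G y ^ p := by
              apply lintegral_mono_ae
              filter_upwards [ae_ne_zero n hn] with y hy
              have hy0 : 0 < ‖y‖ := norm_pos_iff.2 hy
              calc ∫⁻ x, ENNReal.ofReal (‖x‖ ^ (-n - e * p)) * F (x, y) 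
                  = ∫⁻ x, {x : Rn n | ‖y‖ ^ e ≤ (2 * ‖x‖) ^ e}.indicator (fun x => ENNReal.ofReal (‖x‖ ^ (-n - e * p))) x * (ENNReal.ofReal (‖y‖ ^ (e * p)) * G y ^ p) := by
                    refine lintegral_congr fun x => ?_
                    by_cases h : ‖y‖ ^ e ≤ (2 * ‖x‖) ^ e <;> simp [hF, hS, indicator, h]
                _ = (∫⁻ x in {x : Rn n | ‖y‖ ^ e ≤ (2 * ‖x‖) ^ e}, ENNReal.ofReal (‖x‖ ^ (-n - e * p))) * (ENNReal.ofReal (‖y‖ ^ (e * p)) * G y ^ p) := by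
                    have hms : MeasurableSet {x : Rn n | ‖y‖ ^ e ≤ (2 * ‖x‖) ^ e} := measurableSet_le (by fun_prop) (by fun_prop)
                    rw [lintegral_mul_const _ (Measurable.indicator (by fun_prop) hms), lintegral_indicator hms]
                _ ≤ (C1 * ENNReal.ofReal (‖y‖ ^ (-(e * p)))) * (ENNReal.ofReal (‖y‖ ^ (e * p)) * G y ^ p) := by
                    gcongr; exact hx1 y hy
                _ = C1 * (ENNReal.ofReal (‖y‖ ^ (-(e * p))) * ENNReal.ofReal (‖y‖ ^ (e * p))) * G y ^ p := by ring
                _ = _ := by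
                    rw [← ENNReal.ofReal_mul (by positivity), ← Real.rpow_add hy0]; simp
          _ = C1 * ∫⁻ y, G y ^ p := lintegral_const_mul' _ _ hC1
          _ ≤ C1 := mul_le_of_le_one_right zero_le hG1



theorem holder3 {X : Type*} [MeasurableSpace X] (μ : Measure X) (f g h : X → ℝ≥0∞) (hf : AEMeasurable f μ)
    (hg : AEMeasurable g μ) (hh : AEMeasurable h μ) (a b c : ℝ) (ha : 0 < a) (hb : 0 < b) (hc : 0 < c)
    (habc : 1 / a + 1 / b + 1 / c = 1) :
    ∫⁻ x, f x * g x * h x ∂μ ≤ (∫⁻ x, f x ^ a ∂μ) ^ (1 / a) * (∫⁻ x, g x ^ b ∂μ) ^ (1 / b) * (∫⁻ x, h x ^ c ∂μ) ^ (1 / c) := by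
  have := ENNReal.lintegral_prod_norm_pow_le (μ := μ) (Finset.univ : Finset (Fin 3))
    (f := ![fun x => f x ^ a, fun x => g x ^ b, fun x => h x ^ c]) (p := ![1 / a, 1 / b, 1 / c])
    (by
      intro i _
      fin_cases i
      · exact hf.pow_const a
      · exact hg.pow_const b
      · exact hh.pow_const c) 
    (by simpa [Fin.sum_univ_three] using habc)
    (by
      intro i _
      fin_cases i <;> simp <;> positivity)
  simp only [Fin.prod_univ_three] at this
  simp only [Matrix.cons_val_zero, Matrix.cons_val_one, Matrix.cons_val, ← ENNReal.rpow_mul] at this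
  rw [mul_one_div_cancel ha.ne', mul_one_div_cancel hb.ne', mul_one_div_cancel hc.ne'] at this
  simpa using this

theorem setL_sub_left {n : ℕ} (S : Set (Rn n)) (hS : MeasurableSet S) (f : Rn n → ℝ≥0∞) (x : Rn n) :
    ∫⁻ y in {y | x - y ∈ S}, f (x - y) = ∫⁻ w in S, f w := by
  have hm : MeasurableSet {y | x - y ∈ S} := hS.preimage (by fun_prop : Measurable fun y => x - y)
  rw [← lintegral_indicator hm, ← lintegral_indicator hS, ← lintegral_sub_left_eq_self (S.indicator f) x]
  rfl

theorem far2 (n : ℕ) (hn : 2 ≤ n) (α p q a c lam ε : ℝ) (ha : 0 < a) (hc : 0 < c) (hp : 0 < p)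
    (hacp : 1 / a + 1 / c + 1 / p = 1) (hε : 0 < ε) (hq : 1 / q = 1 / p - α / n)
    (h1 : (α - n) * a + n < 0) (h2 : 0 < (-lam - ε) * c + n)
    (K : Rn n → ℝ≥0∞) (hK : Measurable K) (hKh : Hom n (α - n) K)
    (hKp : ∫⁻ w, K w ^ a ∂sg n < ⊤) :
    ∃ C0 : ℝ≥0∞, C0 ≠ ⊤ ∧ ∀ G : Rn n → ℝ≥0∞, Measurable G → ∀ x, x ≠ 0 →
      ENNReal.ofReal (‖x‖ ^ lam) * ∫⁻ y in {y | ‖x‖ / 2 < ‖x - y‖ ∧ ‖y‖ < 2 * ‖x‖}, K (x - y) * (ENNReal.ofReal (‖y‖ ^ (-lam)) * G y)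
       ≤ C0 * ENNReal.ofReal (‖x‖ ^ (-(n / q) - ε)) *
        (∫⁻ y in {y : Rn n | ‖y‖ ^ ε ≤ (2 * ‖x‖) ^ ε}, ENNReal.ofReal (‖y‖ ^ (ε * p)) * G y ^ p) ^ (1 / p) := by
  have hn0 : (0:ℝ) < n := by positivity
  obtain ⟨Cf, hCf, hfar⟩ := hom_far n hn ((α - n) * a) (fun w => K w ^ a) (by fun_prop) (hKh.rpow ha.le) hKp h1
  obtain ⟨Cn, hCn, hnear⟩ := hom_near n hn ((-lam - ε) * c) (fun w => ENNReal.ofReal (‖w‖ ^ (-lam - ε)) ^ c) (by fun_prop)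
    ((Hom_norm n _).rpow hc.le) (by
      have := sg_norm n ((-lam - ε) * c)
      refine lt_of_le_of_lt (le_of_eq (lintegral_congr_ae ?_)) this
      filter_upwards [] with w
      rw [ENNReal.ofReal_rpow_of_nonneg (by positivity) hc.le, Real.rpow_mul (norm_nonneg _)]) h2
  set C0 : ℝ≥0∞ := (Cf * ENNReal.ofReal ((1 / 2) ^ ((α - n) * a + n))) ^ (1 / a) * (Cn * ENNReal.ofReal (2 ^ ((-lam - ε) * c + n))) ^ (1 / c) with hC0
  refine ⟨C0, ENNReal.mul_ne_top (ENNReal.rpow_ne_top_of_nonneg (by positivity) (ENNReal.mul_ne_top hCf (by simp)))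
    (ENNReal.rpow_ne_top_of_nonneg (by positivity) (ENNReal.mul_ne_top hCn (by simp))), fun G hG x hx => ?_⟩
  have hx0 : 0 < ‖x‖ := norm_pos_iff.2 hx
  set E := {y : Rn n | ‖x‖ / 2 < ‖x - y‖ ∧ ‖y‖ < 2 * ‖x‖} with hE
  have s1 : ∫⁻ y in E, K (x - y) * (ENNReal.ofReal (‖y‖ ^ (-lam)) * G y) =
      ∫⁻ y in E, K (x - y) * ENNReal.ofReal (‖y‖ ^ (-lam - ε)) * (ENNReal.ofReal (‖y‖ ^ ε) * G y) := by
    apply lintegral_congr_ae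
    filter_upwards [ae_restrict_of_ae (ae_ne_zero n hn)] with y hy
    have hy0 : 0 < ‖y‖ := norm_pos_iff.2 hy
    rw [show -lam = (-lam - ε) + ε by ring, Real.rpow_add hy0, ENNReal.ofReal_mul (by positivity), add_sub_cancel_right]
    ring
  have i1 : (∫⁻ y in E, K (x - y) ^ a) ^ (1 / a) ≤ (Cf * ENNReal.ofReal ((1 / 2) ^ ((α - n) * a + n))) ^ (1 / a) * ENNReal.ofReal (‖x‖ ^ (α - n + n / a)) := by
    calc _ ≤ (Cf * ENNReal.ofReal ((1 / 2 * ‖x‖) ^ ((α - n) * a + n))) ^ (1 / a) := by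
          gcongr
          refine le_trans ?_ (hfar (1 / 2 * ‖x‖) (by positivity))
          rw [← setL_sub_left _ (measurableSet_lt (by fun_prop) (by fun_prop)) _ x]
          refine lintegral_mono_set fun y hy => ?_
          have := hy.1
          simp only [mem_setOf_eq]
          linarith
      _ = _ := by
        rw [Real.mul_rpow (by norm_num) hx0.le, ENNReal.ofReal_mul (by positivity), ← mul_assoc, ENNReal.mul_rpow_of_nonneg (hz := by positivity), ENNReal.ofReal_rpow_of_pos (p := 1 / a) (by positivity), ← Real.rpow_mul hx0.le]
        congr 3
        field_simp
  have i2 : (∫⁻ y in E, ENNReal.ofReal (‖y‖ ^ (-lam - ε)) ^ c) ^ (1 / c) ≤ (Cn * ENNReal.ofReal (2 ^ ((-lam - ε) * c + n))) ^ (1 / c) * ENNReal.ofReal (‖x‖ ^ (-lam - ε + n / c)) := by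
    calc _ ≤ (Cn * ENNReal.ofReal ((2 * ‖x‖) ^ ((-lam - ε) * c + n))) ^ (1 / c) := by
          gcongr
          refine le_trans ?_ (hnear (2 * ‖x‖) (by positivity))
          refine lintegral_mono_set fun y hy => ?_
          exact hy.2.le
      _ = _ := by
        rw [Real.mul_rpow (by norm_num) hx0.le, ENNReal.ofReal_mul (by positivity), ← mul_assoc, ENNReal.mul_rpow_of_nonneg (hz := by positivity), ENNReal.ofReal_rpow_of_pos (p := 1 / c) (by positivity), ← Real.rpow_mul hx0.le]
        congr 3
        field_simp
  have i3 : (∫⁻ y in E, (ENNReal.ofReal (‖y‖ ^ ε) * G y) ^ p) ^ (1 / p) ≤ (∫⁻ y in {y : Rn n | ‖y‖ ^ ε ≤ (2 * ‖x‖) ^ ε}, ENNReal.ofReal (‖y‖ ^ (ε * p)) * G y ^ p) ^ (1 / p) := by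
    refine ENNReal.rpow_le_rpow ?_ (by positivity)
    calc _ = ∫⁻ y in E, ENNReal.ofReal (‖y‖ ^ (ε * p)) * G y ^ p := by
          refine lintegral_congr fun y => ?_
          rw [ENNReal.mul_rpow_of_nonneg (hz := hp.le), ENNReal.ofReal_rpow_of_nonneg (by positivity) hp.le, Real.rpow_mul (norm_nonneg _)]
      _ ≤ _ := lintegral_mono_set fun y hy => Real.rpow_le_rpow (norm_nonneg _) hy.2.le hε.le
  rw [s1]
  have hol := holder3 (volume.restrict E) (fun y => K (x - y)) (fun y => ENNReal.ofReal (‖y‖ ^ (-lam - ε)))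
    (fun y => ENNReal.ofReal (‖y‖ ^ ε) * G y) (by fun_prop) (by fun_prop) (by fun_prop) a c p ha hc hp hacp
  refine (mul_le_mul_right (hol.trans (mul_le_mul' (mul_le_mul' i1 i2) i3)) _).trans (le_of_eq ?_)
  rw [hC0, show -(n / q) - ε = lam + ((α - n + n / a) + (-lam - ε + n / c)) by
    rw [div_eq_mul_one_div (n:ℝ) q, hq]
    have : (1 / p : ℝ) = 1 - 1 / a - 1 / c := by linarith
    rw [this]; field_simp; ring, Real.rpow_add hx0 lam, Real.rpow_add hx0 (α - n + n / a) (-lam - ε + n / c), ENNReal.ofReal_mul (q := _ * _) (by positivity), ENNReal.ofReal_mul (p := ‖x‖ ^ (α - n + n / a)) (by positivity)]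
  ring

theorem rpow_comp (x y : ℝ) (hx : 0 < x) (hy : 0 < y) (h1 : x ≤ 2 * y) (h2 : y ≤ 2 * x) (γ : ℝ) :
    x ^ γ ≤ 2 ^ |γ| * y ^ γ := by
  rcases le_total 0 γ with h | h
  · rw [abs_of_nonneg h, ← Real.mul_rpow (by norm_num) hy.le]
    exact Real.rpow_le_rpow hx.le h1 h
  · rw [abs_of_nonpos h, Real.rpow_neg (by norm_num), ← Real.inv_rpow (by norm_num), ← Real.mul_rpow (by norm_num) hy.le]
    exact Real.rpow_le_rpow_of_nonpos (by positivity) (by linarith) h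

theorem far1 (n : ℕ) (hn : 2 ≤ n) (α p p' q lam ε : ℝ) (hpp : p'.HolderConjugate p)
    (hε : 0 < ε) (hq : 1 / q = 1 / p - α / n)
    (h1 : (α - n + (-lam + ε)) * p' + n < 0)
    (K : Rn n → ℝ≥0∞) (hK : Measurable K) (hKh : Hom n (α - n) K)
    (hKp : ∫⁻ w, K w ^ p' ∂sg n < ⊤) :
    ∃ C0 : ℝ≥0∞, C0 ≠ ⊤ ∧ ∀ G : Rn n → ℝ≥0∞, Measurable G → ∀ x, x ≠ 0 →
      ENNReal.ofReal (‖x‖ ^ lam) * ∫⁻ y in {y | 2 * ‖x‖ ≤ ‖y‖}, K (x - y) * (ENNReal.ofReal (‖y‖ ^ (-lam)) * G y)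
       ≤ C0 * ENNReal.ofReal (‖x‖ ^ (-(n / q) - (-ε))) *
        (∫⁻ y in {y : Rn n | ‖y‖ ^ (-ε) ≤ (2 * ‖x‖) ^ (-ε)}, ENNReal.ofReal (‖y‖ ^ (-ε * p)) * G y ^ p) ^ (1 / p) := by
  have hn0 : (0:ℝ) < n := by positivity
  have hp : 0 < p := hpp.symm.pos
  have hp' : 0 < p' := hpp.pos
  obtain ⟨Cf, hCf, hfar⟩ := hom_far n hn ((α - n + (-lam + ε)) * p') (fun w => (K w * ENNReal.ofReal (‖w‖ ^ (-lam + ε))) ^ p') (by fun_prop)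
    ((hKh.mul (Hom_norm n (-lam + ε))).rpow hp'.le) (by
      have := sg_mul_norm n ((-lam + ε) * p') (fun w => K w ^ p') (by fun_prop)
      refine lt_of_le_of_lt (le_of_eq (lintegral_congr_ae ?_)) (this.trans_lt hKp)
      filter_upwards [] with w
      rw [ENNReal.mul_rpow_of_nonneg (hz := hp'.le), ENNReal.ofReal_rpow_of_nonneg (by positivity) hp'.le, Real.rpow_mul (norm_nonneg _)]) h1
  set C0 : ℝ≥0∞ := ENNReal.ofReal (2 ^ |-lam + ε|) * (Cf * ENNReal.ofReal ((1 / 2) ^ ((α - n + (-lam + ε)) * p' + n))) ^ (1 / p') with hC0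
  refine ⟨C0, ENNReal.mul_ne_top (by simp) (ENNReal.rpow_ne_top_of_nonneg (by positivity) (ENNReal.mul_ne_top hCf (by simp))), fun G hG x hx => ?_⟩
  have hx0 : 0 < ‖x‖ := norm_pos_iff.2 hx
  set E := {y : Rn n | 2 * ‖x‖ ≤ ‖y‖} with hE
  have hEm : MeasurableSet E := measurableSet_le (by fun_prop) (by fun_prop)
  have hgeo : ∀ y ∈ E, 0 < ‖y‖ ∧ ‖x‖ ≤ ‖x - y‖ ∧ ‖y‖ ≤ 2 * ‖x - y‖ ∧ ‖x - y‖ ≤ 2 * ‖y‖ := by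
    intro y hy
    have hy' : 2 * ‖x‖ ≤ ‖y‖ := hy
    have t1 : ‖x - y‖ ≤ ‖x‖ + ‖y‖ := norm_sub_le _ _
    have t2 : ‖y‖ ≤ ‖x‖ + ‖x - y‖ := by
      calc ‖y‖ = ‖x - (x - y)‖ := by congr 1; abel
        _ ≤ _ := norm_sub_le _ _
    refine ⟨by linarith, by linarith, by linarith, by linarith⟩
  have s1 : ∫⁻ y in E, K (x - y) * (ENNReal.ofReal (‖y‖ ^ (-lam)) * G y) ≤
      ∫⁻ y in E, ENNReal.ofReal (2 ^ |-lam + ε|) * ((K (x - y) * ENNReal.ofReal (‖x - y‖ ^ (-lam + ε))) * (ENNReal.ofReal (‖y‖ ^ (-ε)) * G y)) := by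
    refine setLIntegral_mono' hEm fun y hy => ?_
    obtain ⟨hy0, g1, g2, g3⟩ := hgeo y hy
    have hw : 0 < ‖x - y‖ := by linarith
    have := rpow_comp ‖y‖ ‖x - y‖ hy0 hw g2 g3 (-lam + ε)
    calc _ = K (x - y) * (ENNReal.ofReal (‖y‖ ^ (-lam + ε)) * ENNReal.ofReal (‖y‖ ^ (-ε)) * G y) := by
          rw [← ENNReal.ofReal_mul (by positivity), ← Real.rpow_add hy0]; congr 5; ring
      _ ≤ K (x - y) * (ENNReal.ofReal (2 ^ |-lam + ε| * ‖x - y‖ ^ (-lam + ε)) * ENNReal.ofReal (‖y‖ ^ (-ε)) * G y) := by gcongr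
      _ = _ := by rw [ENNReal.ofReal_mul (by positivity)]; ring
  have i1 : (∫⁻ y in E, (K (x - y) * ENNReal.ofReal (‖x - y‖ ^ (-lam + ε))) ^ p') ^ (1 / p') ≤ (Cf * ENNReal.ofReal ((1 / 2) ^ ((α - n + (-lam + ε)) * p' + n))) ^ (1 / p') * ENNReal.ofReal (‖x‖ ^ (α - n + (-lam + ε) + n / p')) := by
    calc _ ≤ (Cf * ENNReal.ofReal ((1 / 2 * ‖x‖) ^ ((α - n + (-lam + ε)) * p' + n))) ^ (1 / p') := by
          gcongr
          refine le_trans ?_ (hfar (1 / 2 * ‖x‖) (by positivity))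
          rw [← setL_sub_left _ (measurableSet_lt (by fun_prop) (by fun_prop)) _ x]
          refine lintegral_mono_set fun y hy => ?_
          have := (hgeo y hy).2.1
          simp only [mem_setOf_eq]
          linarith
      _ = _ := by
        rw [Real.mul_rpow (by norm_num) hx0.le, ENNReal.ofReal_mul (by positivity), ← mul_assoc, ENNReal.mul_rpow_of_nonneg (hz := by positivity), ENNReal.ofReal_rpow_of_pos (p := 1 / p') (by positivity), ← Real.rpow_mul hx0.le]
        congr 3
        field_simp
  have i3 : (∫⁻ y in E, (ENNReal.ofReal (‖y‖ ^ (-ε)) * G y) ^ p) ^ (1 / p) ≤ (∫⁻ y in {y : Rn n | ‖y‖ ^ (-ε) ≤ (2 * ‖x‖) ^ (-ε)}, ENNReal.ofReal (‖y‖ ^ (-ε * p)) * G y ^ p) ^ (1 / p) := by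
    refine ENNReal.rpow_le_rpow ?_ (by positivity)
    calc _ = ∫⁻ y in E, ENNReal.ofReal (‖y‖ ^ (-ε * p)) * G y ^ p := by
          refine lintegral_congr fun y => ?_
          rw [ENNReal.mul_rpow_of_nonneg (hz := hp.le), ENNReal.ofReal_rpow_of_nonneg (by positivity) hp.le, Real.rpow_mul (norm_nonneg _)]
      _ ≤ _ := lintegral_mono_set fun y hy => Real.rpow_le_rpow_of_nonpos (by positivity) hy (by linarith)
  have hol := ENNReal.lintegral_mul_le_Lp_mul_Lq (volume.restrict E) hpp (f := fun y => K (x - y) * ENNReal.ofReal (‖x - y‖ ^ (-lam + ε)))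
    (g := fun y => ENNReal.ofReal (‖y‖ ^ (-ε)) * G y) (by fun_prop) (by fun_prop)
  rw [lintegral_const_mul' _ _ (by simp)] at s1
  refine (mul_le_mul_right (s1.trans (mul_le_mul_right (hol.trans (mul_le_mul' i1 i3)) _)) _).trans (le_of_eq ?_)
  rw [hC0, show -(n / q) - -ε = lam + (α - n + (-lam + ε) + n / p') by
    rw [div_eq_mul_one_div (n:ℝ) q, hq]
    have hconj := hpp.inv_add_inv_eq_one
    have : (1 / p : ℝ) = 1 - 1 / p' := by rw [one_div, one_div]; linarith
    rw [this]; field_simp; ring, Real.rpow_add hx0 lam, ENNReal.ofReal_mul (by positivity)]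
  ring



theorem add3_rpow (x y z : ℝ≥0∞) (q : ℝ) (hq : 1 ≤ q) :
    (x + y + z) ^ q ≤ 2 ^ (q - 1) * 2 ^ (q - 1) * (x ^ q + y ^ q + z ^ q) := by
  have h1 := ENNReal.rpow_add_le_mul_rpow_add_rpow (x + y) z hq
  have h2 := ENNReal.rpow_add_le_mul_rpow_add_rpow x y hq
  have h3 : (1:ℝ≥0∞) ≤ 2 ^ (q - 1) := by
    simpa using ENNReal.rpow_le_rpow_of_exponent_le (x := 2) (by norm_num) (show (0:ℝ) ≤ q-1 by linarith)
  calc _ ≤ 2 ^ (q - 1) * ((x + y) ^ q + z ^ q) := h1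
    _ ≤ 2 ^ (q - 1) * (2 ^ (q - 1) * (x ^ q + y ^ q) + 2 ^ (q - 1) * z ^ q) := by
      gcongr
      exact le_mul_of_one_le_left zero_le h3
    _ = _ := by ring

theorem weighted (n : ℕ) (hn : 2 ≤ n) (α p p' q a lam : ℝ) (hα : 0 < α) (hpp : p'.HolderConjugate p)
    (hq0 : 0 < q) (hq : 1 / q = 1 / p - α / n) (ha : 0 < a) (hap : 1 / a + 1 / p < 1)
    (hαa : α < n - n / a) (hlam1 : α - n / p < lam) (hlam2 : lam < n * (1 - 1 / a - 1 / p))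
    (K : Rn n → ℝ≥0∞) (hK : Measurable K) (hKh : Hom n (α - n) K)
    (hKa : ∫⁻ w, K w ^ a ∂sg n < ⊤) :
    ∃ C : ℝ≥0∞, C ≠ ⊤ ∧ ∀ G : Rn n → ℝ≥0∞, Measurable G → (∀ y, G y ≠ ⊤) → ∫⁻ y, G y ^ p ≤ 1 →
      ∫⁻ x, (ENNReal.ofReal (‖x‖ ^ lam) * ∫⁻ y, K (x - y) * (ENNReal.ofReal (‖y‖ ^ (-lam)) * G y)) ^ q ≤ C := by
  have hn0 : (0:ℝ) < n := by positivity
  have hp : 0 < p := hpp.symm.pos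
  have hp1 : 1 < p := hpp.symm.lt
  have hp' : 0 < p' := hpp.pos
  have hconj := hpp.inv_add_inv_eq_one
  have hpq : p ≤ q := by
    have : 1 / q ≤ 1 / p := by rw [hq]; have : 0 < α / n := by positivity
                               linarith
    exact (one_div_le_one_div hq0 hp).1 this
  have hq1 : 1 < q := by linarith
  have hpa : p' ≤ a := by
    rw [← one_div_le_one_div ha hp']
    rw [one_div p']; rw [one_div p] at hap; linarith
  have hKp : ∫⁻ w, K w ^ p' ∂sg n < ⊤ := sg_rpow_fin hp'.le hpa hKa
  set ci := 1 - 1 / a - 1 / p with hci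
  have hci0 : 0 < ci := by linarith
  obtain ⟨ε, hε, hε1, hε2⟩ : ∃ ε : ℝ, 0 < ε ∧ lam + ε < n * ci ∧ α - n / p + ε < lam :=
    ⟨min ((n * ci - lam) / 2) ((lam - (α - n / p)) / 2), by
      refine lt_min ?_ ?_ <;> linarith, by
      have := min_le_left ((n * ci - lam) / 2) ((lam - (α - n / p)) / 2); linarith, by
      have := min_le_right ((n * ci - lam) / 2) ((lam - (α - n / p)) / 2); linarith⟩
  obtain ⟨CL, hCL, hL⟩ := hls n hn α p p' q hα hpp hq1 hq K hK hKh hKp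
  obtain ⟨C2, hC2, hF2⟩ := far2 n hn α p q a (1 / ci) lam ε ha (by positivity) hp (by rw [one_div_one_div]; linarith) hε hq
    (by
      have : α * a < (n - n / a) * a := by gcongr
      have h2 : (n - n / a) * a = n * a - n := by field_simp
      nlinarith) 
    (by
      have : (-lam - ε) * (1 / ci) + n = (n * ci - (lam + ε)) * (1 / ci) := by field_simp; ring
      rw [this]; exact mul_pos (by linarith) (by positivity)) K hK hKh hKa
  obtain ⟨C1, hC1, hF1⟩ := far1 n hn α p p' q lam ε hpp hε hq 
    (by
      have : (α - n + (-lam + ε)) * p' + n = p' * (α - n / p + ε - lam) := by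
        have : (p⁻¹ : ℝ) = 1 - p'⁻¹ := by linarith
        rw [div_eq_mul_inv, this]; field_simp; ring
      rw [this]; exact mul_neg_of_pos_of_neg hp' (by linarith)) K hK hKh hKp
  obtain ⟨D2, hD2, hH2⟩ := lemH n hn p q ε hp1.le hpq hε.ne' C2 hC2
  obtain ⟨D1, hD1, hH1⟩ := lemH n hn p q (-ε) hp1.le hpq (by linarith) C1 hC1
  set c0 : ℝ≥0∞ := ENNReal.ofReal (2 ^ |lam|) with hc0
  refine ⟨2 ^ (q - 1) * 2 ^ (q - 1) * (c0 ^ q * CL + D2 + D1), ?_, fun G hG hGt hG1 => ?_⟩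
  · have h2 : (2:ℝ≥0∞) ^ (q - 1) ≠ ⊤ := ENNReal.rpow_ne_top_of_nonneg (by linarith) (by simp)
    refine ENNReal.mul_ne_top (ENNReal.mul_ne_top h2 h2) (ENNReal.add_ne_top.2 ⟨ENNReal.add_ne_top.2 ⟨ENNReal.mul_ne_top ?_ hCL, hD2⟩, hD1⟩)
    exact ENNReal.rpow_ne_top_of_nonneg hq0.le (by simp [hc0])
  set Φ : Rn n → Rn n → ℝ≥0∞ := fun x y => K (x - y) * (ENNReal.ofReal (‖y‖ ^ (-lam)) * G y) with hΦ
  set V2 : Rn n → ℝ≥0∞ := fun x => ENNReal.ofReal (‖x‖ ^ lam) * ∫⁻ y in {y | ‖x‖ / 2 < ‖x - y‖ ∧ ‖y‖ < 2 * ‖x‖}, Φ x y with hV2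
  set V1 : Rn n → ℝ≥0∞ := fun x => ENNReal.ofReal (‖x‖ ^ lam) * ∫⁻ y in {y | 2 * ‖x‖ ≤ ‖y‖}, Φ x y with hV1
  set V0 : Rn n → ℝ≥0∞ := fun x => c0 * ∫⁻ y, K (x - y) * G y with hV0
  have b2 : ∫⁻ x, V2 x ^ q ≤ D2 := hH2 G hG hG1 V2 (fun x hx => hF2 G hG x hx)
  have b1 : ∫⁻ x, V1 x ^ q ≤ D1 := hH1 G hG hG1 V1 (fun x hx => hF1 G hG x hx)
  have b0 : ∫⁻ x, V0 x ^ q ≤ c0 ^ q * CL := by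
    calc ∫⁻ x, V0 x ^ q = ∫⁻ x, c0 ^ q * (∫⁻ y, K (x - y) * G y) ^ q := by
          refine lintegral_congr fun x => ?_
          rw [hV0, ENNReal.mul_rpow_of_nonneg _ _ hq0.le]
      _ = c0 ^ q * ∫⁻ x, (∫⁻ y, K (x - y) * G y) ^ q := lintegral_const_mul' _ _ (ENNReal.rpow_ne_top_of_nonneg hq0.le (by simp [hc0]))
      _ ≤ _ := by gcongr; exact hL G hG hGt hG1
  have mΦ : Measurable (fun z : Rn n × Rn n => Φ z.1 z.2) := by fun_prop
  have mV0 : Measurable V0 := by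
    have : Measurable (fun z : Rn n × Rn n => K (z.1 - z.2) * G z.2) := by fun_prop
    exact measurable_const.mul this.lintegral_prod_right'
  have hmS2 : ∀ x : Rn n, MeasurableSet {y : Rn n | ‖x‖ / 2 < ‖x - y‖ ∧ ‖y‖ < 2 * ‖x‖} := fun x =>
    MeasurableSet.inter (s₁ := {y : Rn n | ‖x‖ / 2 < ‖x - y‖}) (s₂ := {y : Rn n | ‖y‖ < 2 * ‖x‖}) (measurableSet_lt (by fun_prop) (by fun_prop)) (measurableSet_lt (by fun_prop) (by fun_prop))
  have mV2 : Measurable V2 := by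
    set S : Set (Rn n × Rn n) := {z | ‖z.1‖ / 2 < ‖z.1 - z.2‖} ∩ {z | ‖z.2‖ < 2 * ‖z.1‖} with hS
    have hSm : MeasurableSet S := (measurableSet_lt (by fun_prop) (by fun_prop)).inter (measurableSet_lt (by fun_prop) (by fun_prop))
    have h3 := (mΦ.indicator hSm).lintegral_prod_right' (ν := volume)
    have : V2 = fun x => ENNReal.ofReal (‖x‖ ^ lam) * ∫⁻ y, S.indicator (fun z : Rn n × Rn n => Φ z.1 z.2) (x, y) := by
      ext x
      simp only [hV2]
      rw [← lintegral_indicator (hmS2 x)]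
      rfl
    rw [this]
    exact Measurable.mul (by fun_prop) h3
  have hpt : ∀ x, x ≠ 0 → ENNReal.ofReal (‖x‖ ^ lam) * ∫⁻ y, Φ x y ≤ V0 x + V2 x + V1 x := by
    intro x hx
    have hx0 : 0 < ‖x‖ := norm_pos_iff.2 hx
    have hsub : (univ : Set (Rn n)) ⊆ ({y : Rn n | ‖x - y‖ ≤ ‖x‖ / 2} ∪ {y : Rn n | ‖x‖ / 2 < ‖x - y‖ ∧ ‖y‖ < 2 * ‖x‖}) ∪ {y | 2 * ‖x‖ ≤ ‖y‖} := by
      intro y _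
      simp only [mem_union, mem_setOf_eq]
      rcases le_or_gt ‖x - y‖ (‖x‖ / 2) with h | h
      · exact Or.inl (Or.inl h)
      · rcases lt_or_ge ‖y‖ (2 * ‖x‖) with h' | h'
        · exact Or.inl (Or.inr ⟨h, h'⟩)
        · exact Or.inr h'
    have hsum : ∫⁻ y, Φ x y ≤ (∫⁻ y in {y : Rn n | ‖x - y‖ ≤ ‖x‖ / 2}, Φ x y) + (∫⁻ y in {y : Rn n | ‖x‖ / 2 < ‖x - y‖ ∧ ‖y‖ < 2 * ‖x‖}, Φ x y) + ∫⁻ y in {y | 2 * ‖x‖ ≤ ‖y‖}, Φ x y := by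
      rw [← setLIntegral_univ]
      refine (lintegral_mono_set hsub).trans ((lintegral_union_le _ _ _).trans ?_)
      gcongr
      exact lintegral_union_le _ _ _
    refine (mul_le_mul_right hsum _).trans ?_
    rw [mul_add, mul_add]
    gcongr
    rw [hV0, ← lintegral_const_mul' _ _ (by simp)]
    simp only
    rw [← lintegral_const_mul' _ _ (by simp [hc0])]
    refine le_trans (setLIntegral_mono' (g := fun y => c0 * (K (x - y) * G y)) (measurableSet_le (by fun_prop) (by fun_prop)) fun y hy => ?_) (setLIntegral_le_lintegral _ _)
    have hy' : ‖x - y‖ ≤ ‖x‖ / 2 := hy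
    have t1 : ‖x‖ ≤ ‖x - y‖ + ‖y‖ := by
      calc ‖x‖ = ‖(x - y) + y‖ := by congr 1; abel
        _ ≤ _ := norm_add_le _ _
    have t2 : ‖y‖ ≤ ‖x‖ + ‖x - y‖ := by
      calc ‖y‖ = ‖x - (x - y)‖ := by congr 1; abel
        _ ≤ _ := norm_sub_le _ _
    have hy0 : 0 < ‖y‖ := by linarith
    have := rpow_comp ‖x‖ ‖y‖ hx0 hy0 (by linarith) (by linarith) lam
    simp only [hΦ]
    calc _ ≤ ENNReal.ofReal (2 ^ |lam| * ‖y‖ ^ lam) * (K (x - y) * (ENNReal.ofReal (‖y‖ ^ (-lam)) * G y)) := by gcongr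
      _ = c0 * (ENNReal.ofReal (‖y‖ ^ lam) * ENNReal.ofReal (‖y‖ ^ (-lam))) * (K (x - y) * G y) := by
        rw [ENNReal.ofReal_mul (by positivity)]; ring
      _ = _ := by
        rw [← ENNReal.ofReal_mul (by positivity), ← Real.rpow_add hy0]; simp
  calc _ ≤ ∫⁻ x, 2 ^ (q - 1) * 2 ^ (q - 1) * (V0 x ^ q + V2 x ^ q + V1 x ^ q) := by
        apply lintegral_mono_ae
        filter_upwards [ae_ne_zero n hn] with x hx
        exact (ENNReal.rpow_le_rpow (hpt x hx) hq0.le).trans (add3_rpow _ _ _ _ hq1.le)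
    _ = 2 ^ (q - 1) * 2 ^ (q - 1) * ((∫⁻ x, V0 x ^ q) + (∫⁻ x, V2 x ^ q) + ∫⁻ x, V1 x ^ q) := by
        rw [lintegral_const_mul' _ _ (by
          have h2 : (2:ℝ≥0∞) ^ (q - 1) ≠ ⊤ := ENNReal.rpow_ne_top_of_nonneg (by linarith) (by simp)
          exact ENNReal.mul_ne_top h2 h2)]
        rw [lintegral_add_left (by fun_prop), lintegral_add_left (by fun_prop)]
    _ ≤ _ := by gcongr



theorem lint_smul (n : ℕ) (s : ℝ) (hs : 0 < s) (Φ : Rn n → ℝ≥0∞) (hΦ : Measurable Φ) :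
    ∫⁻ y, Φ y = ENNReal.ofReal (s ^ (n : ℝ)) * ∫⁻ y, Φ (s • y) := by
  have h := Measure.map_addHaar_smul (volume : Measure (Rn n)) hs.ne'
  have h2 : ∫⁻ y, Φ (s • y) = ENNReal.ofReal (s ^ (n:ℝ))⁻¹ * ∫⁻ y, Φ y := by
    rw [← lintegral_map hΦ (by fun_prop : Measurable fun y : Rn n => s • y)]
    have e : (fun y : Rn n => s • y) = (s • · ) := rfl
    rw [e, h, lintegral_smul_measure, finrank_euclideanSpace_fin, abs_of_pos (by positivity), Real.rpow_natCast, smul_eq_mul]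
  rw [h2, ← mul_assoc, ← ENNReal.ofReal_mul (by positivity), mul_inv_cancel₀ (by positivity)]
  simp

theorem young_fin (n : ℕ) (ρ b a : ℝ) (hρ : 1 < ρ) (hb : 1 < b) (ha : 0 < a) (h : 1 / a = 1 / ρ + 1 / b - 1)
    (f g : Rn n → ℝ≥0∞) (hf : Measurable f) (hg : Measurable g) (hff : ∫⁻ y, f y ^ ρ < ⊤) (hgg : ∫⁻ y, g y ^ b < ⊤) :
    ∫⁻ w, (∫⁻ y, f y * g (w - y)) ^ a < ⊤ := by
  have hρ0 : 0 < ρ := by linarith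
  have hb0 : 0 < b := by linarith
  have h1 : 0 < 1 - 1 / b := by
    have : 1 / b < 1 := by rw [div_lt_one hb0]; exact hb
    linarith
  have h2 : 0 < 1 - 1 / ρ := by
    have : 1 / ρ < 1 := by rw [div_lt_one hρ0]; exact hρ
    linarith
  have hia : 0 < 1 / a := by positivity
  set X := ∫⁻ y, f y ^ ρ with hX
  set Y := ∫⁻ y, g y ^ b with hY
  have key : ∀ w, (∫⁻ y, f y * g (w - y)) ^ a ≤ (∫⁻ y, f y ^ ρ * g (w - y) ^ b) * (X ^ (1 - 1 / b) * Y ^ (1 - 1 / ρ)) ^ a := by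
    intro w
    have hh := holder3 volume (fun y => (f y ^ ρ * g (w - y) ^ b) ^ (1 / a)) (fun y => (f y ^ ρ) ^ (1 - 1 / b)) (fun y => (g (w - y) ^ b) ^ (1 - 1 / ρ))
      (by fun_prop) (by fun_prop) (by fun_prop) a (1 - 1 / b)⁻¹ (1 - 1 / ρ)⁻¹ ha (by positivity) (by positivity)
      (by simp only [one_div, inv_inv]; simp only [one_div] at h; linarith)
    have e1 : ∀ y, (f y ^ ρ * g (w - y) ^ b) ^ (1 / a) * (f y ^ ρ) ^ (1 - 1 / b) * (g (w - y) ^ b) ^ (1 - 1 / ρ) = f y * g (w - y) := by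
      intro y
      rw [ENNReal.mul_rpow_of_nonneg _ _ hia.le]
      calc _ = ((f y ^ ρ) ^ (1 / a) * (f y ^ ρ) ^ (1 - 1 / b)) * ((g (w - y) ^ b) ^ (1 / a) * (g (w - y) ^ b) ^ (1 - 1 / ρ)) := by ring
        _ = _ := by
          rw [← ENNReal.rpow_add_of_nonneg _ _ hia.le h1.le, ← ENNReal.rpow_add_of_nonneg _ _ hia.le h2.le,
            ← ENNReal.rpow_mul, ← ENNReal.rpow_mul,
            show ρ * (1 / a + (1 - 1 / b)) = 1 by rw [h]; field_simp; ring,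
            show b * (1 / a + (1 - 1 / ρ)) = 1 by rw [h]; field_simp; ring]
          simp
    simp only [e1] at hh
    simp only [← ENNReal.rpow_mul, one_div, inv_inv, inv_mul_cancel₀ ha.ne', ENNReal.rpow_one] at hh
    simp only [one_div] at h1 h2
    rw [mul_assoc ρ, mul_assoc b, mul_inv_cancel₀ h1.ne', mul_inv_cancel₀ h2.ne', mul_one, mul_one, lintegral_sub_left_eq_self (fun y => g y ^ b) w,
      ← hX, ← hY, mul_assoc] at hh
    simp only [one_div]
    calc _ ≤ _ := ENNReal.rpow_le_rpow hh ha.le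
      _ = _ := by
        rw [ENNReal.mul_rpow_of_nonneg _ _ ha.le, ← ENNReal.rpow_mul, inv_mul_cancel₀ ha.ne', ENNReal.rpow_one]
  refine (lintegral_mono key).trans_lt ?_
  rw [lintegral_mul_const _ (by
    have : Measurable (fun z : Rn n × Rn n => f z.2 ^ ρ * g (z.1 - z.2) ^ b) := by fun_prop
    exact this.lintegral_prod_right')]
  rw [lintegral_lintegral_swap (by fun_prop)]
  have : ∀ y, ∫⁻ x, f y ^ ρ * g (x - y) ^ b = f y ^ ρ * Y := by
    intro y
    rw [lintegral_const_mul _ (by fun_prop), lintegral_sub_right_eq_self (fun x => g x ^ b) y]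
  simp only [this]
  rw [lintegral_mul_const _ (by fun_prop)]
  refine ENNReal.mul_lt_top (ENNReal.mul_lt_top hff hgg) ?_
  refine ENNReal.rpow_lt_top_of_nonneg ha.le ?_
  exact ENNReal.mul_ne_top (ENNReal.rpow_ne_top_of_nonneg h1.le hff.ne) (ENNReal.rpow_ne_top_of_nonneg h2.le hgg.ne)

noncomputable def Om (n : ℕ) (α : ℝ) (Ω : Rn n → ℝ) (y : Rn n) : ℝ≥0∞ :=
  ENNReal.ofReal |Ω (‖y‖⁻¹ • y)| * ENNReal.ofReal (‖y‖ ^ (α - n - 1))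

noncomputable def hk (n : ℕ) (z : Rn n) : ℝ≥0∞ := ENNReal.ofReal (‖z‖ ^ (1 - (n:ℝ)))

noncomputable def Kin (n : ℕ) (α : ℝ) (Ω : Rn n → ℝ) (w y : Rn n) : ℝ≥0∞ :=
  if ‖w - y‖ < 2 * ‖y‖ then Om n α Ω y * hk n (w - y) else 0

noncomputable def Ker (n : ℕ) (α : ℝ) (Ω : Rn n → ℝ) (w : Rn n) : ℝ≥0∞ := ∫⁻ y, Kin n α Ω w y

theorem Om_meas (n : ℕ) (α : ℝ) (Ω : Rn n → ℝ) (hΩ : Measurable Ω) : Measurable (Om n α Ω) := by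
  unfold Om; fun_prop

theorem hk_meas (n : ℕ) : Measurable (hk n) := by unfold hk; fun_prop

theorem hk_hom (n : ℕ) : Hom n (1 - n) (hk n) := Hom_norm n _

theorem Om_hom (n : ℕ) (α : ℝ) (Ω : Rn n → ℝ) : Hom n (α - n - 1) (Om n α Ω) := by
  have : Hom n 0 (fun y => ENNReal.ofReal |Ω (‖y‖⁻¹ • y)|) := by
    intro s hs w
    simp only [Real.rpow_zero, ENNReal.ofReal_one, one_mul]
    rw [norm_smul, Real.norm_of_nonneg hs.le, smul_smul, mul_inv, mul_right_comm, inv_mul_cancel₀ hs.ne', one_mul]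
  have h2 := this.mul (Hom_norm n (α - n - 1))
  rw [zero_add] at h2
  exact h2

theorem Kin_meas (n : ℕ) (α : ℝ) (Ω : Rn n → ℝ) (hΩ : Measurable Ω) :
    Measurable (fun z : Rn n × Rn n => Kin n α Ω z.1 z.2) := by
  unfold Kin
  have h1 := Om_meas n α Ω hΩ
  have h2 := hk_meas n
  refine Measurable.ite ?_ (by fun_prop) measurable_const
  exact measurableSet_lt (by fun_prop) (by fun_prop)

theorem Kin_meas' (n : ℕ) (α : ℝ) (Ω : Rn n → ℝ) (hΩ : Measurable Ω) (w : Rn n) :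
    Measurable (fun y : Rn n => Kin n α Ω w y) := by
  unfold Kin
  have h1 := Om_meas n α Ω hΩ
  have h2 := hk_meas n
  refine Measurable.ite ?_ (by fun_prop) measurable_const
  exact measurableSet_lt (by fun_prop) (by fun_prop)

theorem Kin_scale (n : ℕ) (α : ℝ) (Ω : Rn n → ℝ) (s : ℝ) (hs : 0 < s) (w y : Rn n) :
    Kin n α Ω (s • w) (s • y) = ENNReal.ofReal (s ^ (α - 2 * n)) * Kin n α Ω w y := by
  unfold Kin
  have hc : ‖s • w - s • y‖ < 2 * ‖s • y‖ ↔ ‖w - y‖ < 2 * ‖y‖ := by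
    rw [← smul_sub, norm_smul, norm_smul, Real.norm_of_nonneg hs.le, show 2 * (s * ‖y‖) = s * (2 * ‖y‖) by ring]
    exact mul_lt_mul_iff_right₀ hs
  by_cases hy : ‖w - y‖ < 2 * ‖y‖
  · rw [if_pos hy, if_pos (hc.2 hy), ← smul_sub, Om_hom n α Ω s hs, hk_hom n s hs,
      show α - 2 * n = (α - n - 1) + (1 - n) by ring, Real.rpow_add hs, ENNReal.ofReal_mul (by positivity)]
    ring
  · rw [if_neg hy, if_neg (fun h => hy (hc.1 h)), mul_zero]

theorem Ker_meas (n : ℕ) (α : ℝ) (Ω : Rn n → ℝ) (hΩ : Measurable Ω) : Measurable (Ker n α Ω) :=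
  (Kin_meas n α Ω hΩ).lintegral_prod_right'

theorem Ker_hom (n : ℕ) (α : ℝ) (Ω : Rn n → ℝ) (hΩ : Measurable Ω) : Hom n (α - n) (Ker n α Ω) := by
  intro s hs w
  show ∫⁻ y, Kin n α Ω (s • w) y = ENNReal.ofReal (s ^ (α - n)) * ∫⁻ y, Kin n α Ω w y
  rw [lint_smul n s hs (fun y => Kin n α Ω (s • w) y) (Kin_meas' n α Ω hΩ _)]
  simp only [Kin_scale n α Ω s hs]
  rw [lintegral_const_mul (f := fun y => Kin n α Ω w y) _ (Kin_meas' n α Ω hΩ _), ← mul_assoc, ← ENNReal.ofReal_mul (by positivity),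
    ← Real.rpow_add hs, show (n:ℝ) + (α - 2 * n) = α - n by ring]



theorem sg_ae (n : ℕ) : ∀ᵐ y ∂sg n, ‖y‖ = 1 := by
  rw [sg, ae_map_iff measurable_subtype_coe.aemeasurable (measurableSet_eq_fun (by fun_prop) (by fun_prop))]
  exact Eventually.of_forall fun y => by simp

theorem Ker_fin (n : ℕ) (hn : 2 ≤ n) (α ρ b a : ℝ) (hρ : 1 < ρ) (hb : 1 < b) (ha : 0 < a) (h : 1 / a = 1 / ρ + 1 / b - 1)
    (hbn : 0 < (1 - (n:ℝ)) * b + n) (hα : α < n) (Ω : Rn n → ℝ) (hΩ : Measurable Ω)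
    (hfin : ∫⁻ y, ENNReal.ofReal (|Ω y| ^ ρ) ∂sg n < ⊤) : ∫⁻ w, Ker n α Ω w ^ a ∂sg n < ⊤ := by
  have hn2 : (2:ℝ) ≤ n := by exact_mod_cast hn
  have hρ0 : 0 < ρ := by linarith
  have hb0 : 0 < b := by linarith
  have ha1 : 1 ≤ a := by
    have : 1 / b < 1 := by rw [div_lt_one hb0]; exact hb
    have : 1 / ρ < 1 := by rw [div_lt_one hρ0]; exact hρ
    have h3 : 1 / a ≤ 1 := by linarith
    rwa [div_le_one ha] at h3
  have mOm := Om_meas n α Ω hΩ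
  have mhk := hk_meas n
  have hfin' : ∫⁻ y, ENNReal.ofReal |Ω y| ^ ρ ∂sg n < ⊤ := by
    simpa only [ENNReal.ofReal_rpow_of_nonneg (abs_nonneg _) hρ0.le] using hfin
  have hfin1 : ∫⁻ y, ENNReal.ofReal |Ω y| ∂sg n < ⊤ := by
    simpa using sg_rpow_fin (b := 1) zero_le_one hρ.le hfin'
  refine hom_sphere_fin n hn _ _ ((Ker_meas n α Ω hΩ).pow_const a) ((Ker_hom n α Ω hΩ).rpow ha.le) ?_
  -- pieces
  set S : Set (Rn n) := {w : Rn n | 1 < ‖w‖ ∧ ‖w‖ ≤ 2} with hS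
  have mS : MeasurableSet S := by rw [hS]; measurability
  set Ωr : Rn n → ℝ≥0∞ := fun y => ENNReal.ofReal |Ω (‖y‖⁻¹ • y)| with hΩr
  have mΩr : Measurable Ωr := by rw [hΩr]; fun_prop
  have hΩrh : Hom n 0 Ωr := by
    intro s hs w
    simp only [hΩr, Real.rpow_zero, ENNReal.ofReal_one, one_mul]
    rw [norm_smul, Real.norm_of_nonneg hs.le, smul_smul, mul_inv, mul_right_comm, inv_mul_cancel₀ hs.ne', one_mul]
  -- far
  obtain ⟨C1, hC1, hfar⟩ := hom_far n hn _ (fun y => Om n α Ω y * hk n y) (by fun_prop) ((Om_hom n α Ω).mul (hk_hom n)) (by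
    refine lt_of_le_of_lt (le_of_eq ?_) hfin1
    refine lintegral_congr_ae ?_
    filter_upwards [sg_ae n] with y hy
    simp [Om, hk, hy]) (by linarith)
  have hfar1 := hfar 4 (by norm_num)
  set F0 : Rn n → ℝ≥0∞ := {w : Rn n | 4 < ‖w‖}.indicator (fun y => ENNReal.ofReal (2 ^ |1 - (n:ℝ)|) * (Om n α Ω y * hk n y)) with hF0
  have mset4 : MeasurableSet {w : Rn n | 4 < ‖w‖} := measurableSet_lt (by fun_prop) (by fun_prop)
  have mF0 : Measurable F0 := Measurable.indicator (by fun_prop) mset4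
  have hF0fin : ∫⁻ y, F0 y < ⊤ := by
    rw [hF0, lintegral_indicator mset4, lintegral_const_mul _ (by fun_prop)]
    exact ENNReal.mul_lt_top (by simp) (hfar1.trans_lt (ENNReal.mul_lt_top hC1.lt_top (by simp)))
  -- middle
  set D1 : Set (Rn n) := {y | 1 / 3 < ‖y‖ ∧ ‖y‖ ≤ 4} with hD1
  have mD1 : MeasurableSet D1 := by rw [hD1]; measurability
  set f1 : Rn n → ℝ≥0∞ := D1.indicator (Om n α Ω) with hf1
  have mf1 : Measurable f1 := mOm.indicator mD1
  have hf1fin : ∫⁻ y, f1 y ^ ρ < ⊤ := by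
    obtain ⟨C2, hC2, hnear⟩ := hom_near n hn _ (fun y => Ωr y ^ ρ) (by fun_prop) (hΩrh.rpow hρ0.le) (by
      refine lt_of_le_of_lt (le_of_eq ?_) hfin'
      refine lintegral_congr_ae ?_
      filter_upwards [sg_ae n] with y hy
      simp [hΩr, hy]) (by linarith)
    have hn4 := hnear 4 (by norm_num)
    have mset : MeasurableSet {w : Rn n | ‖w‖ ≤ 4} := measurableSet_le (by fun_prop) (by fun_prop)
    refine lt_of_le_of_lt (b := ∫⁻ y, {w : Rn n | ‖w‖ ≤ 4}.indicator (fun y => ENNReal.ofReal ((1 / 3) ^ (α - n - 1)) ^ ρ * Ωr y ^ ρ) y) ?_ ?_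
    · refine lintegral_mono fun y => ?_
      by_cases hy : y ∈ D1
      · have hy2 : y ∈ {w : Rn n | ‖w‖ ≤ 4} := hy.2
        rw [hf1, indicator_of_mem hy, indicator_of_mem hy2, ← ENNReal.mul_rpow_of_nonneg _ _ hρ0.le]
        refine ENNReal.rpow_le_rpow ?_ hρ0.le
        rw [Om, mul_comm]
        exact mul_le_mul' (ENNReal.ofReal_le_ofReal (Real.rpow_le_rpow_of_nonpos (by norm_num) hy.1.le (by linarith))) le_rfl
      · rw [hf1, indicator_of_notMem hy, ENNReal.zero_rpow_of_pos hρ0]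
        exact zero_le
    · rw [lintegral_indicator mset, lintegral_const_mul _ (by fun_prop)]
      refine ENNReal.mul_lt_top (ENNReal.rpow_lt_top_of_nonneg hρ0.le (by simp)) ?_
      exact hn4.trans_lt (ENNReal.mul_lt_top hC2.lt_top (by simp))
  set D2 : Set (Rn n) := {y | ‖y‖ ≤ 8} with hD2
  have mD2 : MeasurableSet D2 := measurableSet_le (by fun_prop) (by fun_prop)
  set g1 : Rn n → ℝ≥0∞ := D2.indicator (hk n) with hg1
  have mg1 : Measurable g1 := mhk.indicator mD2
  have hg1fin : ∫⁻ y, g1 y ^ b < ⊤ := by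
    obtain ⟨C2, hC2, hnear⟩ := hom_near n hn _ (fun y => hk n y ^ b) (by fun_prop) ((hk_hom n).rpow hb0.le) (by
      refine lt_of_le_of_lt (le_of_eq ?_) (sg_norm n 1)
      refine lintegral_congr_ae ?_
      filter_upwards [sg_ae n] with y hy
      simp [hk, hy]) hbn
    have hn8 := hnear 8 (by norm_num)
    have : (fun y => g1 y ^ b) = D2.indicator (fun y => hk n y ^ b) := by
      ext y
      by_cases hy : y ∈ D2
      · rw [hg1, indicator_of_mem hy, indicator_of_mem hy]
      · rw [hg1, indicator_of_notMem hy, indicator_of_notMem hy, ENNReal.zero_rpow_of_pos hb0]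
    rw [this, lintegral_indicator mD2]
    exact hn8.trans_lt (ENNReal.mul_lt_top hC2.lt_top (by simp))
  have hY := young_fin n ρ b a hρ hb ha h f1 g1 mf1 mg1 hf1fin hg1fin
  have key : ∀ w ∈ S, Ker n α Ω w ≤ (∫⁻ y, F0 y) + ∫⁻ y, f1 y * g1 (w - y) := by
    intro w hw
    rw [← lintegral_add_left mF0]
    refine lintegral_mono fun y => ?_
    unfold Kin
    split_ifs with hy
    · have t1 : ‖w‖ ≤ ‖w - y‖ + ‖y‖ := by simpa using norm_add_le (w - y) y
      have t2 : ‖y‖ ≤ ‖w - y‖ + ‖w‖ := by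
        have := norm_sub_le w (w - y)
        simp only [sub_sub_cancel] at this
        linarith
      have hw1 := hw.1
      have hw2 := hw.2
      by_cases h4 : 4 < ‖y‖
      · have hm : y ∈ {w : Rn n | 4 < ‖w‖} := h4
        refine le_trans ?_ le_self_add
        rw [hF0, indicator_of_mem hm, mul_left_comm]
        gcongr
        rw [hk, hk, ← ENNReal.ofReal_mul (by positivity)]
        exact ENNReal.ofReal_le_ofReal (rpow_comp _ _ (by linarith) (by linarith) hy.le (by linarith) _)
      · refine le_trans ?_ le_add_self
        have hm1 : y ∈ D1 := ⟨by linarith, by linarith⟩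
        have hm2 : w - y ∈ D2 := by show ‖w - y‖ ≤ 8; linarith
        rw [hf1, hg1, indicator_of_mem hm1, indicator_of_mem hm2]
    · exact zero_le
  refine lt_of_le_of_lt (setLIntegral_mono' mS (fun w hw => 
    (ENNReal.rpow_le_rpow (key w hw) ha.le).trans (ENNReal.rpow_add_le_mul_rpow_add_rpow _ _ ha1))) ?_
  have h2t : (2:ℝ≥0∞) ^ (a - 1) < ⊤ := ENNReal.rpow_lt_top_of_nonneg (by linarith) (by simp)
  rw [lintegral_const_mul' _ _ h2t.ne, lintegral_add_left measurable_const, lintegral_const]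
  refine ENNReal.mul_lt_top h2t (ENNReal.add_lt_top.2 ⟨?_, ?_⟩)
  · refine ENNReal.mul_lt_top (ENNReal.rpow_lt_top_of_nonneg ha.le hF0fin.ne) ?_
    rw [Measure.restrict_apply_univ]
    refine lt_of_le_of_lt (measure_mono (t := closedBall 0 2) ?_) measure_closedBall_lt_top
    intro w hw
    simpa using hw.2
  · exact (setLIntegral_le_lintegral _ _).trans_lt hY



theorem radial (n : ℕ) (hn : 2 ≤ n) (D : ℝ) (hD : 0 < D) (γ : Rn n → ℝ≥0∞) (hγ : Measurable γ) :
    ∫⁻ h in ball (0 : Rn n) D, ∫⁻ s in Ioc (0:ℝ) 1, γ (s • h) * ENNReal.ofReal ‖h‖ ≤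
      ENNReal.ofReal (D ^ (n:ℝ) / n) * ∫⁻ u in ball (0 : Rn n) D, γ u * hk n u := by
  have hn0 : (0:ℝ) < n := by positivity
  have mhk := hk_meas n
  rw [lintegral_lintegral_swap (by fun_prop)]
  set Q : ℝ → Rn n → ℝ≥0∞ := fun s u => if ‖u‖ < s * D then γ u * ENNReal.ofReal ‖u‖ else 0 with hQ
  have mQ : Measurable (fun z : ℝ × Rn n => Q z.1 z.2) := by
    rw [hQ]
    exact Measurable.ite (measurableSet_lt (by fun_prop) (by fun_prop)) (by fun_prop) measurable_const
  have mQs : ∀ s, Measurable (Q s) := fun s => by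
    rw [hQ]
    exact Measurable.ite (measurableSet_lt (by fun_prop) (by fun_prop)) (by fun_prop) measurable_const
  have e1 : ∀ s ∈ Ioc (0:ℝ) 1, ∫⁻ h in ball (0 : Rn n) D, γ (s • h) * ENNReal.ofReal ‖h‖ =
      ∫⁻ u, ENNReal.ofReal (s ^ (-(n:ℝ) - 1)) * Q s u := by
    intro s hs
    have hs0 : 0 < s := hs.1
    rw [lintegral_const_mul _ (mQs s), lint_smul n s hs0 (Q s) (mQs s), ← mul_assoc, ← ENNReal.ofReal_mul (by positivity),
      ← Real.rpow_add hs0, ← lintegral_const_mul (f := fun y => Q s (s • y)) _ ((mQs s).comp (by fun_prop : Measurable fun y : Rn n => s • y)), ← lintegral_indicator measurableSet_ball]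
    refine lintegral_congr fun h => ?_
    have hc : ‖s • h‖ < s * D ↔ ‖h‖ < D := by
      rw [norm_smul, Real.norm_of_nonneg hs0.le]
      exact mul_lt_mul_iff_right₀ hs0
    simp only [hQ]
    by_cases hh : ‖h‖ < D
    · rw [indicator_of_mem (by simpa using hh), if_pos (hc.2 hh), norm_smul, Real.norm_of_nonneg hs0.le, ENNReal.ofReal_mul hs0.le,
        show -(n:ℝ) - 1 + n = -1 by ring, Real.rpow_neg_one]
      calc _ = γ (s • h) * ENNReal.ofReal ‖h‖ * (ENNReal.ofReal s⁻¹ * ENNReal.ofReal s) := by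
              rw [← ENNReal.ofReal_mul (by positivity), inv_mul_cancel₀ hs0.ne']; simp
        _ = _ := by ring
    · rw [indicator_of_notMem (by simpa using hh), if_neg (fun h => hh (hc.1 h)), mul_zero]
  rw [setLIntegral_congr_fun measurableSet_Ioc e1, lintegral_lintegral_swap (by fun_prop), ← lintegral_const_mul _ (by fun_prop), ← lintegral_indicator measurableSet_ball]
  refine lintegral_mono_ae ?_
  filter_upwards [ae_ne_zero n hn] with u hu
  have hu0 : 0 < ‖u‖ := norm_pos_iff.2 hu
  by_cases hh : ‖u‖ < D
  · rw [indicator_of_mem (by simpa using hh)]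
    calc _ ≤ ∫⁻ s in Ioc (0:ℝ) 1, (Ioi (‖u‖ / D)).indicator (fun s => ENNReal.ofReal (s ^ (-(n:ℝ) - 1))) s * (γ u * ENNReal.ofReal ‖u‖) := by
          refine setLIntegral_mono' measurableSet_Ioc fun s hs => ?_
          simp only [hQ]
          split_ifs with h
          · rw [indicator_of_mem]
            rw [mem_Ioi, div_lt_iff₀ hD]; exact h
          · simp
      _ ≤ ∫⁻ s, (Ioi (‖u‖ / D)).indicator (fun s => ENNReal.ofReal (s ^ (-(n:ℝ) - 1))) s * (γ u * ENNReal.ofReal ‖u‖) := setLIntegral_le_lintegral _ _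
      _ = ENNReal.ofReal ((‖u‖ / D) ^ (-(n:ℝ)) / n) * (γ u * ENNReal.ofReal ‖u‖) := by
          rw [lintegral_mul_const _ (Measurable.indicator (by fun_prop) measurableSet_Ioi), lintegral_indicator measurableSet_Ioi,
            lint_Ioi_rpow n _ hn0 (by positivity)]
      _ = γ u * ENNReal.ofReal ((‖u‖ / D) ^ (-(n:ℝ)) / n * ‖u‖) := by
          rw [ENNReal.ofReal_mul (by positivity)]; ring
      _ = γ u * ENNReal.ofReal (D ^ (n:ℝ) / n * ‖u‖ ^ (1 - (n:ℝ))) := by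
          congr 2
          rw [Real.div_rpow hu0.le hD.le, Real.rpow_neg hD.le, sub_eq_neg_add, Real.rpow_add hu0, Real.rpow_one]
          field_simp
      _ = _ := by
          rw [ENNReal.ofReal_mul (by positivity), hk]; ring
      _ ≤ _ := le_rfl
  · rw [indicator_of_notMem (by simpa using hh)]
    refine le_of_eq ?_
    refine (setLIntegral_congr_fun measurableSet_Ioc fun s hs => ?_).trans lintegral_zero
    simp only [hQ]
    rw [if_neg, mul_zero]
    have := hs.2
    nlinarith

theorem gradNorm_eq {n : ℕ} (f : Rn n → ℝ) (y : Rn n) : gradNorm f y = ‖fderiv ℝ f y‖ := by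
  unfold gradNorm gradient
  simp

theorem gradNorm_cont {n : ℕ} (f : Rn n → ℝ) (hf : ContDiff ℝ 1 f) : Continuous (gradNorm f) := by
  have : gradNorm f = fun y => ‖fderiv ℝ f y‖ := funext (gradNorm_eq f)
  rw [this]
  exact (hf.continuous_fderiv (by norm_num)).norm

theorem ftc_seg {n : ℕ} (f : Rn n → ℝ) (hf : ContDiff ℝ 1 f) (z h : Rn n) :
    ‖f (z + h) - f z‖ₑ ≤ ∫⁻ s in Ioc (0:ℝ) 1, ENNReal.ofReal (gradNorm f (z + s • h)) * ENNReal.ofReal ‖h‖ := by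
  have hd : ∀ s : ℝ, HasDerivAt (fun s : ℝ => f (z + s • h)) (fderiv ℝ f (z + s • h) h) s := by
    intro s
    have h1 : HasDerivAt (fun s : ℝ => z + s • h) h s := by
      simpa using ((hasDerivAt_id s).smul_const h).const_add z
    exact ((hf.differentiable (by norm_num) _).hasFDerivAt).comp_hasDerivAt s h1
  have hc : ContDiffOn ℝ 1 (fun s : ℝ => f (z + s • h)) (Icc 0 1) := by
    apply ContDiff.contDiffOn
    exact hf.comp (by fun_prop)
  have := enorm_sub_le_lintegral_deriv_of_contDiffOn_Icc hc zero_le_one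
  simp only [one_smul, zero_smul, add_zero] at this
  refine this.trans ?_
  rw [setLIntegral_congr Ioc_ae_eq_Icc.symm]
  refine lintegral_mono fun s => ?_
  rw [(hd s).deriv, gradNorm_eq, ← ENNReal.ofReal_mul (norm_nonneg _), ← ofReal_norm_eq_enorm]
  exact ENNReal.ofReal_le_ofReal (ContinuousLinearMap.le_opNorm _ _)

theorem osc (n : ℕ) (hn : 2 ≤ n) (D : ℝ) (hD : 0 < D) (f : Rn n → ℝ) (hf : ContDiff ℝ 1 f) (z : Rn n) :
    ∫⁻ ξ in ball z D, ‖f ξ - f z‖ₑ ≤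
      ENNReal.ofReal (D ^ (n:ℝ) / n) * ∫⁻ u in ball z D, ENNReal.ofReal (gradNorm f u) * hk n (u - z) := by
  have hg := gradNorm_cont f hf
  have h := radial n hn D hD (fun u => ENNReal.ofReal (gradNorm f (z + u))) (by fun_prop)
  have tr : ∀ F : Rn n → ℝ≥0∞, ∫⁻ ξ in ball z D, F ξ = ∫⁻ u in ball (0 : Rn n) D, F (z + u) := by
    intro F
    rw [← lintegral_indicator measurableSet_ball, ← lintegral_indicator measurableSet_ball, ← lintegral_add_left_eq_self _ z]
    refine lintegral_congr fun u => ?_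
    by_cases hu : u ∈ ball (0 : Rn n) D
    · rw [indicator_of_mem hu, indicator_of_mem]
      simpa using hu
    · rw [indicator_of_notMem hu, indicator_of_notMem]
      simpa using hu
  rw [tr, tr]
  simp only [add_sub_cancel_left]
  exact (lintegral_mono fun u => ftc_seg f hf z u).trans h



theorem vol_ball_n (n : ℕ) (x : Rn n) (t : ℝ) (ht : 0 < t) :
    volume (ball x t) = ENNReal.ofReal (t ^ (n:ℝ)) * volume (ball (0 : Rn n) 1) := by
  rw [Measure.addHaar_ball_of_pos _ _ ht, finrank_euclideanSpace_fin, Real.rpow_natCast]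

theorem avg_dev (n : ℕ) (f : Rn n → ℝ) (hf : Continuous f) (x : Rn n) (t : ℝ) (ht : 0 < t) (a : ℝ) :
    ENNReal.ofReal |a - ballAvg f x t| ≤ (volume (ball x t))⁻¹ * ∫⁻ ξ in ball x t, ‖f ξ - a‖ₑ := by
  have hv0 : volume (ball x t) ≠ 0 := (measure_ball_pos _ _ ht).ne'
  have hvt : volume (ball x t) ≠ ⊤ := measure_ball_lt_top.ne
  have hr : volume.real (ball x t) ≠ 0 := by
    rw [Measure.real, ENNReal.toReal_ne_zero]; exact ⟨hv0, hvt⟩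
  have hint : IntegrableOn f (ball x t) :=
    (hf.continuousOn.integrableOn_compact (isCompact_closedBall x t)).mono_set ball_subset_closedBall
  have e : ballAvg f x t - a = (volume.real (ball x t))⁻¹ * ∫ ξ in ball x t, (f ξ - a) := by
    rw [ballAvg, setAverage_eq, integral_sub hint (integrableOn_const hvt), setIntegral_const, smul_eq_mul, smul_eq_mul]
    field_simp
  rw [abs_sub_comm, e, abs_mul, ENNReal.ofReal_mul (abs_nonneg _)]
  gcongr
  · rw [abs_of_nonneg (by positivity), Measure.real, ← ENNReal.toReal_inv, ENNReal.ofReal_toReal (ENNReal.inv_ne_top.2 hv0)]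
  · have := enorm_integral_le_lintegral_enorm (μ := volume.restrict (ball x t)) (fun ξ => f ξ - a)
    rwa [← ofReal_norm_eq_enorm, Real.norm_eq_abs] at this

theorem ballAvg_meas (n : ℕ) (f : Rn n → ℝ) (hf : Continuous f) (x : Rn n) : Measurable (fun t => ballAvg f x t) := by
  have h1 : Measurable (fun t => volume.real (ball x t)) := by
    refine Measurable.ennreal_toReal ?_
    have : Monotone (fun t => volume (ball x t)) := fun s t h => measure_mono (ball_subset_ball h)
    exact this.measurable
  have h2 : Measurable (fun t => ∫ ξ in ball x t, f ξ) := by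
    have hm : MeasurableSet {z : ℝ × Rn n | dist z.2 x < z.1} := measurableSet_lt (by fun_prop) (by fun_prop)
    have h3 : StronglyMeasurable (fun z : ℝ × Rn n => {z : ℝ × Rn n | dist z.2 x < z.1}.indicator (fun z => f z.2) z) :=
      ((by fun_prop : Continuous fun z : ℝ × Rn n => f z.2).measurable.indicator hm).stronglyMeasurable
    have h4 := (h3.integral_prod_right' (ν := (volume : Measure (Rn n)))).measurable
    have e : (fun t => ∫ ξ in ball x t, f ξ) = fun t => ∫ y, {z : ℝ × Rn n | dist z.2 x < z.1}.indicator (fun z => f z.2) (t, y) := by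
      ext t
      rw [← integral_indicator measurableSet_ball]
      rfl
    rw [e]
    exact h4
  simp only [ballAvg, setAverage_eq, smul_eq_mul]
  exact h1.inv.mul h2

theorem dev_le (n : ℕ) (hn : 2 ≤ n) : ∃ C : ℝ≥0∞, C ≠ ⊤ ∧ ∀ (f : Rn n → ℝ), ContDiff ℝ 1 f → ∀ x y : Rn n, y ≠ 0 →
    ENNReal.ofReal |f (x - y) - ballAvg f x ‖y‖| ≤
      C * ∫⁻ u in ball (x - y) (2 * ‖y‖), ENNReal.ofReal (gradNorm f u) * hk n (u - (x - y)) := by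
  have hn0 : (0:ℝ) < n := by positivity
  have hv0 : volume (ball (0 : Rn n) 1) ≠ 0 := (measure_ball_pos _ _ one_pos).ne'
  have hvt : volume (ball (0 : Rn n) 1) ≠ ⊤ := measure_ball_lt_top.ne
  refine ⟨(volume (ball (0 : Rn n) 1))⁻¹ * ENNReal.ofReal (2 ^ (n:ℝ) / n), ENNReal.mul_ne_top (ENNReal.inv_ne_top.2 hv0) (by simp), fun f hf x y hy => ?_⟩
  have ht : 0 < ‖y‖ := norm_pos_iff.2 hy
  have h1 := avg_dev n f hf.continuous x ‖y‖ ht (f (x - y))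
  have h2 := osc n hn (2 * ‖y‖) (by positivity) f hf (x - y)
  have hsub : ball x ‖y‖ ⊆ ball (x - y) (2 * ‖y‖) := ball_subset_ball' (by simp [dist_eq_norm]; linarith)
  set I := ∫⁻ u in ball (x - y) (2 * ‖y‖), ENNReal.ofReal (gradNorm f u) * hk n (u - (x - y))
  calc _ ≤ _ := h1
    _ ≤ (volume (ball x ‖y‖))⁻¹ * (ENNReal.ofReal ((2 * ‖y‖) ^ (n:ℝ) / n) * I) := by
      gcongr
      exact (lintegral_mono_set hsub).trans h2
    _ = (volume (ball (0 : Rn n) 1))⁻¹ * (ENNReal.ofReal (‖y‖ ^ (n:ℝ))⁻¹ * ENNReal.ofReal ((2 * ‖y‖) ^ (n:ℝ) / n)) * I := by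
      rw [vol_ball_n n x _ ht, ENNReal.mul_inv (Or.inr hvt) (Or.inl (by simp)), ENNReal.ofReal_inv_of_pos (by positivity)]
      ring
    _ = _ := by
      rw [← ENNReal.ofReal_mul (by positivity), Real.mul_rpow (by norm_num) ht.le]
      congr 3
      field_simp

theorem Kin_meas2 (n : ℕ) (α : ℝ) (Ω : Rn n → ℝ) (hΩ : Measurable Ω) (x : Rn n) :
    Measurable (fun z : Rn n × Rn n => Kin n α Ω (x - z.2) z.1) := by
  unfold Kin
  have h1 := Om_meas n α Ω hΩ
  have h2 := hk_meas n
  refine Measurable.ite ?_ (by fun_prop) measurable_const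
  exact measurableSet_lt (by fun_prop) (by fun_prop)

theorem B_le (n : ℕ) (hn : 2 ≤ n) (α : ℝ) (Ω : Rn n → ℝ) (hΩ : Measurable Ω) : ∃ C : ℝ≥0∞, C ≠ ⊤ ∧ ∀ (f : Rn n → ℝ), ContDiff ℝ 1 f → ∀ x : Rn n,
    ∫⁻ y, Om n α Ω y * ENNReal.ofReal |f (x - y) - ballAvg f x ‖y‖| ≤
      C * ∫⁻ u, Ker n α Ω (x - u) * ENNReal.ofReal (gradNorm f u) := by
  obtain ⟨C, hC, h⟩ := dev_le n hn
  refine ⟨C, hC, fun f hf x => ?_⟩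
  have mhk := hk_meas n
  have mg := (gradNorm_cont f hf).measurable
  have mK := Kin_meas2 n α Ω hΩ x
  have mKf : Measurable (fun z : Rn n × Rn n => Kin n α Ω (x - z.2) z.1 * ENNReal.ofReal (gradNorm f z.2)) :=
    Measurable.mul mK (by fun_prop)
  calc _ ≤ ∫⁻ y, C * ∫⁻ u, Kin n α Ω (x - u) y * ENNReal.ofReal (gradNorm f u) := by
        refine lintegral_mono_ae ?_
        filter_upwards [ae_ne_zero n hn] with y hy
        calc _ ≤ Om n α Ω y * (C * ∫⁻ u in ball (x - y) (2 * ‖y‖), ENNReal.ofReal (gradNorm f u) * hk n (u - (x - y))) := by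
              gcongr
              exact h f hf x y hy
          _ = C * (∫⁻ u, Om n α Ω y * (ball (x - y) (2 * ‖y‖)).indicator (fun u => ENNReal.ofReal (gradNorm f u) * hk n (u - (x - y))) u) := by
              rw [lintegral_const_mul _ (Measurable.indicator (by fun_prop) measurableSet_ball), lintegral_indicator measurableSet_ball]
              ring
          _ = _ := by
              congr 1
              refine lintegral_congr fun u => ?_
              unfold Kin
              have e : ‖u - (x - y)‖ = ‖x - u - y‖ := by
                rw [norm_sub_rev]; congr 1; abel
              by_cases hu : ‖x - u - y‖ < 2 * ‖y‖
              · rw [if_pos hu, indicator_of_mem (by rw [mem_ball, dist_eq_norm, e]; exact hu), hk, hk, e]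
                ring
              · rw [if_neg hu, indicator_of_notMem (by rw [mem_ball, dist_eq_norm, e]; exact hu)]
                simp
    _ = C * ∫⁻ y, ∫⁻ u, Kin n α Ω (x - u) y * ENNReal.ofReal (gradNorm f u) := lintegral_const_mul' _ _ hC
    _ = C * ∫⁻ u, ∫⁻ y, Kin n α Ω (x - u) y * ENNReal.ofReal (gradNorm f u) := by
        rw [lintegral_lintegral_swap mKf.aemeasurable]
    _ = _ := by
        congr 1
        refine lintegral_congr fun u => ?_
        rw [lintegral_mul_const' _ _ (by simp)]
        rfl



theorem ker_enorm (n : ℕ) (α : ℝ) (Ω : Rn n → ℝ) (y : Rn n) (a : ℝ) :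
    ‖(Ω (‖y‖⁻¹ • y) / ‖y‖ ^ ((n : ℝ) + 1 - α)) * a‖ₑ = Om n α Ω y * ENNReal.ofReal |a| := by
  rw [← ofReal_norm_eq_enorm, Real.norm_eq_abs, abs_mul, ENNReal.ofReal_mul (abs_nonneg _), Om, div_eq_mul_inv, ← Real.rpow_neg (norm_nonneg _),
    abs_mul, ENNReal.ofReal_mul (abs_nonneg _), abs_of_nonneg (a := ‖y‖ ^ _) (by positivity)]
  congr 4
  ring_nf

theorem op_le_B (n : ℕ) (hn : 2 ≤ n) (α : ℝ) (hα : α < n) (Ω : Rn n → ℝ) (hΩ : Measurable Ω)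
    (hfin : ∫⁻ y, ENNReal.ofReal |Ω y| ∂sg n < ⊤) (h0 : ∫ y, Ω y ∂sg n = 0) (f : Rn n → ℝ) (hf : IsCcSmooth f) (x : Rn n) :
    ENNReal.ofReal |roughOp n α Ω f x| ≤ ∫⁻ y, Om n α Ω y * ENNReal.ofReal |f (x - y) - ballAvg f x ‖y‖| := by
  have hn0 : (0:ℝ) < n := by positivity
  have hfc : Continuous f := hf.1.continuous
  have mf := hfc.measurable
  have mc := ballAvg_meas n f hfc x
  have mOm := Om_meas n α Ω hΩ
  by_cases hB : ∫⁻ y, Om n α Ω y * ENNReal.ofReal |f (x - y) - ballAvg f x ‖y‖| = ⊤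
  · rw [hB]; exact le_top
  set F : Rn n → ℝ := fun y => (Ω (‖y‖⁻¹ • y) / ‖y‖ ^ ((n : ℝ) + 1 - α)) * (f (x - y) - ballAvg f x ‖y‖) with hF
  set G : Rn n → ℝ := fun y => (Ω (‖y‖⁻¹ • y) / ‖y‖ ^ ((n : ℝ) + 1 - α)) * ballAvg f x ‖y‖ with hG
  have mcn : Measurable (fun y : Rn n => ballAvg f x ‖y‖) := mc.comp measurable_norm
  have mF : Measurable F := by rw [hF]; fun_prop
  have mG : Measurable G := by rw [hG]; fun_prop
  have iF : Integrable F := by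
    refine ⟨mF.aestronglyMeasurable, ?_⟩
    rw [HasFiniteIntegral]
    simp only [hF, ker_enorm]
    exact lt_top_iff_ne_top.2 hB
  have mset : ∀ ε : ℝ, MeasurableSet {y : Rn n | ε < ‖y‖} := fun ε => measurableSet_lt (by fun_prop) (by fun_prop)
  have iG : ∀ ε : ℝ, 0 < ε → IntegrableOn G {y : Rn n | ε < ‖y‖} := by
    intro ε hε
    refine ⟨mG.aestronglyMeasurable, ?_⟩
    rw [HasFiniteIntegral]
    simp only [hG, ker_enorm]
    have hv0 : volume (ball (0 : Rn n) 1) ≠ 0 := (measure_ball_pos _ _ one_pos).ne'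
    have hvt : volume (ball (0 : Rn n) 1) ≠ ⊤ := measure_ball_lt_top.ne
    set A := (volume (ball (0 : Rn n) 1))⁻¹ * ∫⁻ ξ, ‖f ξ‖ₑ with hA
    have hAt : A ≠ ⊤ := by
      refine ENNReal.mul_ne_top (ENNReal.inv_ne_top.2 hv0) ?_
      exact (hfc.integrable_of_hasCompactSupport hf.2).2.ne
    obtain ⟨C1, hC1, hfar⟩ := hom_far n hn _ (fun y => Om n α Ω y * ENNReal.ofReal (‖y‖ ^ (-(n:ℝ)))) (by fun_prop) ((Om_hom n α Ω).mul (Hom_norm n _)) (by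
      refine lt_of_le_of_lt (le_of_eq ?_) hfin
      refine lintegral_congr_ae ?_
      filter_upwards [sg_ae n] with y hy
      simp [Om, hy]) (by linarith)
    refine lt_of_le_of_lt (b := ∫⁻ y in {y : Rn n | ε < ‖y‖}, A * (Om n α Ω y * ENNReal.ofReal (‖y‖ ^ (-(n:ℝ))))) ?_ ?_
    · refine setLIntegral_mono' (mset ε) fun y (hy : ε < ‖y‖) => ?_
      have ht : 0 < ‖y‖ := hε.trans hy
      rw [mul_left_comm]
      gcongr
      have := avg_dev n f hfc x ‖y‖ ht 0
      simp only [zero_sub, abs_neg, sub_zero] at this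
      refine this.trans ?_
      rw [vol_ball_n n x _ ht, ENNReal.mul_inv (Or.inr hvt) (Or.inl (by simp)), hA, Real.rpow_neg ht.le, ENNReal.ofReal_inv_of_pos (by positivity)]
      calc _ ≤ (ENNReal.ofReal (‖y‖ ^ (n:ℝ)))⁻¹ * (volume (ball (0 : Rn n) 1))⁻¹ * ∫⁻ ξ, ‖f ξ‖ₑ := by
            gcongr
            exact Measure.restrict_le_self
        _ = _ := by ring
    · rw [lintegral_const_mul _ (by fun_prop)]
      exact ENNReal.mul_lt_top hAt.lt_top ((hfar ε hε).trans_lt (ENNReal.mul_lt_top hC1.lt_top (by simp)))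
  have zG : ∀ ε : ℝ, 0 < ε → ∫ y in {y : Rn n | ε < ‖y‖}, G y = 0 := by
    intro ε hε
    rw [← int_polar_zero n hn ((Ioi ε).indicator fun t => (t ^ ((n : ℝ) + 1 - α))⁻¹ * ballAvg f x t) Ω hΩ h0, ← integral_indicator (mset ε)]
    refine integral_congr_ae (Eventually.of_forall fun y => ?_)
    simp only [hG]
    by_cases hy : ε < ‖y‖
    · rw [indicator_of_mem (show y ∈ {y : Rn n | ε < ‖y‖} from hy), indicator_of_mem (show ‖y‖ ∈ Ioi ε from hy)]
      ring
    · rw [indicator_of_notMem (show y ∉ {y : Rn n | ε < ‖y‖} from hy), indicator_of_notMem (show ‖y‖ ∉ Ioi ε from hy), mul_zero]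
  have hcov : AECover (volume : Measure (Rn n)) (𝓝[>] (0:ℝ)) (fun ε => {y : Rn n | ε < ‖y‖}) := by
    refine ⟨?_, fun ε => mset ε⟩
    filter_upwards [ae_ne_zero n hn] with y hy
    have ht : 0 < ‖y‖ := norm_pos_iff.2 hy
    exact mem_nhdsWithin_of_mem_nhds (Iio_mem_nhds ht)
  have hlim : Tendsto (roughOpTrunc n α Ω f x) (𝓝[>] (0:ℝ)) (𝓝 (∫ y, F y)) := by
    refine (hcov.integral_tendsto_of_countably_generated iF).congr' ?_
    filter_upwards [self_mem_nhdsWithin] with ε (hε : 0 < ε)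
    unfold roughOpTrunc
    rw [← add_zero (∫ y in {y : Rn n | ε < ‖y‖}, F y), ← zG ε hε, ← integral_add iF.integrableOn (iG ε hε)]
    refine integral_congr_ae (Eventually.of_forall fun y => ?_)
    simp only [hF, hG]
    ring
  have : roughOp n α Ω f x = ∫ y, F y := hlim.limUnder_eq
  rw [this, ← Real.norm_eq_abs, ofReal_norm_eq_enorm]
  refine (enorm_integral_le_lintegral_enorm F).trans (le_of_eq ?_)
  refine lintegral_congr fun y => ?_
  simp only [hF, ker_enorm]



theorem params (n : ℕ) (hn : 2 ≤ n) (r α p lam : ℝ) (hr1 : 1 < r) (hrn : r < n)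
    (hα1 : α < 1 + n - n / r) (hp : 1 / p < 1 - 1 / r + 1 / n) (hlam2 : lam < 1 + n - n / r - n / p) :
    ∃ ρ b a : ℝ, 1 < ρ ∧ ρ < r ∧ 1 < b ∧ 0 < a ∧ 1 / a = 1 / ρ + 1 / b - 1 ∧ 0 < (1 - (n:ℝ)) * b + n ∧
      1 / a + 1 / p < 1 ∧ α < n - n / a ∧ lam < n * (1 - 1 / a - 1 / p) := by
  have hn2 : (2:ℝ) ≤ n := by exact_mod_cast hn
  have hn0 : (0:ℝ) < n := by linarith
  have hr0 : 0 < r := by linarith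
  have hir : 1 / r < 1 := by rw [div_lt_one hr0]; exact hr1
  have hir0 : 0 < 1 / r := by positivity
  have hin : 1 / (n:ℝ) < 1 / r := one_div_lt_one_div_of_lt hr0 hrn
  have hin0 : 0 < 1 / (n:ℝ) := by positivity
  have hnn : (n:ℝ) * (1 / n) = 1 := by field_simp
  rw [show (n:ℝ) / r = n * (1 / r) by ring] at hα1 hlam2
  rw [show (n:ℝ) / p = n * (1 / p) by ring] at hlam2
  set R := 1 / r
  set P := 1 / p
  set N := 1 / (n:ℝ)
  have u1 : 0 < (1 + n - n * R - α) / n := by apply div_pos _ hn0; linarith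
  have u2 : 0 < (1 + n - n * R - n * P - lam) / n := by apply div_pos _ hn0; linarith
  obtain ⟨η, h0, h1, h2, h3, h4, h5⟩ : ∃ η : ℝ, 0 < η ∧ η < 1 - R ∧ η < N ∧ 2 * η < 1 - R + N - P ∧
      2 * η < (1 + n - n * R - α) / n ∧ 2 * η < (1 + n - n * R - n * P - lam) / n := by
    set m := min (min (1 - R) N) (min (1 - R + N - P) (min ((1 + n - n * R - α) / n) ((1 + n - n * R - n * P - lam) / n))) with hm
    have hm0 : 0 < m := by
      simp only [hm, lt_min_iff]
      exact ⟨⟨by linarith, hin0⟩, by linarith, u1, u2⟩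
    have m1 : m ≤ 1 - R := (min_le_left _ _).trans (min_le_left _ _)
    have m2 : m ≤ N := (min_le_left _ _).trans (min_le_right _ _)
    have m3 : m ≤ 1 - R + N - P := (min_le_right _ _).trans (min_le_left _ _)
    have m4 : m ≤ (1 + n - n * R - α) / n := (min_le_right _ _).trans ((min_le_right _ _).trans (min_le_left _ _))
    have m5 : m ≤ (1 + n - n * R - n * P - lam) / n := (min_le_right _ _).trans ((min_le_right _ _).trans (min_le_right _ _))
    exact ⟨m / 3, by linarith, by linarith, by linarith, by linarith, by linarith, by linarith⟩
  rw [lt_div_iff₀ hn0] at h4 h5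
  have hX : 0 < R + η := by linarith
  have hY : 0 < 1 - N + η := by linarith
  have hZ : 0 < R - N + 2 * η := by linarith
  refine ⟨(R + η)⁻¹, (1 - N + η)⁻¹, (R - N + 2 * η)⁻¹, ?_, ?_, ?_, by positivity, ?_, ?_, ?_, ?_, ?_⟩
  · rw [one_lt_inv₀ hX]; linarith
  · rw [inv_lt_comm₀ hX hr0, ← one_div]; linarith
  · rw [one_lt_inv₀ hY]; linarith
  · simp only [one_div, inv_inv]; ring
  · have : (1 - (n:ℝ)) * (1 - N + η)⁻¹ + n = (1 - n + n * (1 - N + η)) * (1 - N + η)⁻¹ := by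
      field_simp
    rw [this]
    apply mul_pos _ (by positivity)
    nlinarith
  · simp only [one_div, inv_inv]; linarith
  · simp only [div_inv_eq_mul]; nlinarith
  · simp only [one_div, inv_inv]; nlinarith

theorem final_scale (n : ℕ) (hn : 2 ≤ n) (p q lam : ℝ) (hp : 0 < p) (hq : 0 < q) (K : Rn n → ℝ≥0∞) (hK : Measurable K) (C : ℝ≥0∞) 
    (hC : ∀ G : Rn n → ℝ≥0∞, Measurable G → (∀ y, G y ≠ ⊤) → ∫⁻ y, G y ^ p ≤ 1 →
      ∫⁻ x, (ENNReal.ofReal (‖x‖ ^ lam) * ∫⁻ y, K (x - y) * (ENNReal.ofReal (‖y‖ ^ (-lam)) * G y)) ^ q ≤ C)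
    (g : Rn n → ℝ) (hg : Measurable g) (hg0 : ∀ y, 0 ≤ g y) (hfin : ∫⁻ x, ENNReal.ofReal (‖x‖ ^ lam * g x) ^ p ≠ ⊤) :
    (∫⁻ x, (ENNReal.ofReal (‖x‖ ^ lam) * ∫⁻ y, K (x - y) * ENNReal.ofReal (g y)) ^ q) ^ (1 / q) ≤
      C ^ (1 / q) * (∫⁻ x, ENNReal.ofReal (‖x‖ ^ lam * g x) ^ p) ^ (1 / p) := by
  set I := ∫⁻ x, ENNReal.ofReal (‖x‖ ^ lam * g x) ^ p with hI
  have hgm : Measurable fun x : Rn n => ENNReal.ofReal (‖x‖ ^ lam * g x) := by fun_prop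
  by_cases hI0 : I = 0
  · rw [hI, lintegral_eq_zero_iff (by fun_prop)] at hI0
    have hz : ∀ᵐ y : Rn n, ENNReal.ofReal (g y) = 0 := by
      filter_upwards [hI0, ae_ne_zero n hn] with y hy hy0
      have ht : 0 < ‖y‖ := norm_pos_iff.2 hy0
      simp only [Pi.zero_apply] at hy
      rw [ENNReal.rpow_eq_zero_iff_of_pos hp, ENNReal.ofReal_mul (by positivity), mul_eq_zero] at hy
      rcases hy with h | h
      · exfalso
        rw [ENNReal.ofReal_eq_zero] at h
        have : 0 < ‖y‖ ^ lam := by positivity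
        linarith
      · exact h
    have : ∀ x, ∫⁻ y, K (x - y) * ENNReal.ofReal (g y) = 0 := by
      intro x
      refine (lintegral_congr_ae (g := fun _ => 0) ?_).trans lintegral_zero
      filter_upwards [hz] with y hy
      rw [hy, mul_zero]
    simp only [this, mul_zero, ENNReal.zero_rpow_of_pos hq, lintegral_zero]
    rw [ENNReal.zero_rpow_of_pos (by positivity)]
    exact zero_le
  set N := I ^ (1 / p) with hN
  have hN0 : N ≠ 0 := by
    rw [hN, Ne, ENNReal.rpow_eq_zero_iff_of_pos (by positivity)]; exact hI0
  have hNt : N ≠ ⊤ := ENNReal.rpow_ne_top_of_nonneg (by positivity) hfin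
  have h1 := hC (fun y => N⁻¹ * ENNReal.ofReal (‖y‖ ^ lam * g y)) (by fun_prop)
    (fun y => ENNReal.mul_ne_top (ENNReal.inv_ne_top.2 hN0) (by simp)) (by
      simp only [ENNReal.mul_rpow_of_nonneg _ _ hp.le]
      rw [lintegral_const_mul _ (by fun_prop), ← hI, ENNReal.inv_rpow, hN, ← ENNReal.rpow_mul, one_div_mul_cancel hp.ne', ENNReal.rpow_one]
      exact (ENNReal.inv_mul_cancel hI0 hfin).le)
  have h2 : ∀ x, ∫⁻ y, K (x - y) * ENNReal.ofReal (g y) =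
      N * ∫⁻ y, K (x - y) * (ENNReal.ofReal (‖y‖ ^ (-lam)) * (N⁻¹ * ENNReal.ofReal (‖y‖ ^ lam * g y))) := by
    intro x
    rw [← lintegral_const_mul' _ _ hNt]
    refine lintegral_congr_ae ?_
    filter_upwards [ae_ne_zero n hn] with y hy0
    have ht : 0 < ‖y‖ := norm_pos_iff.2 hy0
    rw [ENNReal.ofReal_mul (by positivity)]
    calc _ = K (x - y) * ENNReal.ofReal (g y) * ((N * N⁻¹) * (ENNReal.ofReal (‖y‖ ^ (-lam)) * ENNReal.ofReal (‖y‖ ^ lam))) := by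
          rw [ENNReal.mul_inv_cancel hN0 hNt, ← ENNReal.ofReal_mul (by positivity), ← Real.rpow_add ht]
          simp
      _ = _ := by ring
  simp only [h2]
  have h3 : ∀ x : Rn n, (ENNReal.ofReal (‖x‖ ^ lam) * (N * ∫⁻ y, K (x - y) * (ENNReal.ofReal (‖y‖ ^ (-lam)) * (N⁻¹ * ENNReal.ofReal (‖y‖ ^ lam * g y))))) ^ q =
      N ^ q * (ENNReal.ofReal (‖x‖ ^ lam) * ∫⁻ y, K (x - y) * (ENNReal.ofReal (‖y‖ ^ (-lam)) * (N⁻¹ * ENNReal.ofReal (‖y‖ ^ lam * g y)))) ^ q := by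
    intro x
    rw [mul_left_comm, ENNReal.mul_rpow_of_nonneg _ _ hq.le]
  simp only [h3]
  rw [lintegral_const_mul' _ _ (ENNReal.rpow_ne_top_of_nonneg hq.le hNt), ENNReal.mul_rpow_of_nonneg _ _ (by positivity), ← ENNReal.rpow_mul,
    mul_one_div_cancel hq.ne', ENNReal.rpow_one, mul_comm]
  gcongr


/-- Power-weighted Sobolev inequality for `T_{Ω,α}` with
`Ω ∈ L^{r,r*}(𝕊^{n-1})` of mean zero. -/
theorem statement5 (n : ℕ) (hn : 2 ≤ n) (r r' rstar α : ℝ)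
    (hr1 : 1 < r) (hrn : r < n) (hr' : r' = r / (r - 1)) (hrstar : rstar = n * r / (n - r))
    (hα0 : 0 < α) (hα1 : α < 1 + n / r')
    (Ω : Rn n → ℝ) (hΩmeas : Measurable Ω) (hΩlor : lorentzSphere n r rstar Ω < ⊤)
    (hΩint : Integrable Ω (sphereMeasure n))
    (hΩmean : ∫ y, Ω y ∂sphereMeasure n = 0)
    (p q lam : ℝ) (hp1 : r' * n / (r' + n) < p) (hp2 : p < n / α)
    (hq : 1 / q = 1 / p - α / n)
    (hlam1 : α - n / p < lam) (hlam2 : lam < 1 + n / r' - n / p) :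
    ∃ C > (0 : ℝ), ∀ f : Rn n → ℝ, IsCcSmooth f →
      (∫⁻ x : Rn n, ENNReal.ofReal (‖x‖ ^ lam * |roughOp n α Ω f x|) ^ q) ^ (1 / q) ≤
        ENNReal.ofReal C *
          (∫⁻ x : Rn n, ENNReal.ofReal (‖x‖ ^ lam * gradNorm f x) ^ p) ^ (1 / p) := by
  have hn2 : (2:ℝ) ≤ n := by exact_mod_cast hn
  have hn0 : (0:ℝ) < n := by linarith
  have hr0 : 0 < r := by linarith
  have hr10 : 0 < r - 1 := by linarith
  have hr'0 : 0 < r' := by rw [hr']; positivity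
  have e1 : (n:ℝ) / r' = n - n / r := by rw [hr']; field_simp
  have e2 : 1 / r' = 1 - 1 / r := by rw [hr']; field_simp
  have hp0 : 0 < p := lt_trans (by positivity) hp1
  have hip : 1 / p < 1 - 1 / r + 1 / n := by
    have : 1 / p < 1 / (r' * n / (r' + n)) := one_div_lt_one_div_of_lt (by positivity) hp1
    have e3 : 1 / (r' * n / (r' + n)) = 1 / r' + 1 / n := by field_simp; ring
    rw [e3, e2] at this
    linarith
  have hin : 1 / (n:ℝ) < 1 / r := one_div_lt_one_div_of_lt hr0 hrn
  have hpgt : 1 < p := by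
    have : 1 / p < 1 := by linarith
    rwa [div_lt_one hp0] at this
  have hpa : α / n < 1 / p := by
    rw [lt_div_iff₀ hα0] at hp2
    rw [div_lt_div_iff₀ hn0 hp0]; linarith
  have hq0 : 0 < q := by
    have : 0 < 1 / q := by rw [hq]; linarith
    exact one_div_pos.1 this
  have hαn : α < n := by
    have : (n:ℝ) / r = n * (1 / r) := by ring
    have h2 : (n:ℝ) * (1 / n) = 1 := by field_simp
    have h3 := mul_lt_mul_of_pos_left hin hn0
    linarith
  obtain ⟨ρ, b, a, hρ1, hρr, hb, ha, hab, hbn, hap, hαa, hlama⟩ :=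
    params n hn r α p lam hr1 hrn (by linarith) hip (by linarith)
  have hρfin := lor_sg n hn r rstar ρ hr1 hrn hrstar Ω hΩmeas hΩlor hρ1.le hρr
  have hρ0 : 0 < ρ := by linarith
  have hfin1 : ∫⁻ y, ENNReal.ofReal |Ω y| ∂sg n < ⊤ := by
    have hfin' : ∫⁻ y, ENNReal.ofReal |Ω y| ^ ρ ∂sg n < ⊤ := by
      simpa only [ENNReal.ofReal_rpow_of_nonneg (abs_nonneg _) hρ0.le] using hρfin
    simpa using sg_rpow_fin (b := 1) zero_le_one hρ1.le hfin'
  have hmean := mean_sg n hn Ω hΩmean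
  have hKa := Ker_fin n hn α ρ b a hρ1 hb ha hab hbn hαn Ω hΩmeas hρfin
  have mK := Ker_meas n α Ω hΩmeas
  obtain ⟨C1, hC1, hW⟩ := weighted n hn α p (p.conjExponent) q a lam hα0 (Real.HolderConjugate.conjExponent hpgt).symm hq0 hq ha hap hαa hlam1 hlama
    (Ker n α Ω) mK (Ker_hom n α Ω hΩmeas) hKa
  obtain ⟨C2, hC2, hB⟩ := B_le n hn α Ω hΩmeas
  have hCt : C2 * C1 ^ (1 / q) ≠ ⊤ := ENNReal.mul_ne_top hC2 (ENNReal.rpow_ne_top_of_nonneg (by positivity) hC1)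
  refine ⟨(C2 * C1 ^ (1 / q)).toReal + 1, by positivity, fun f hf => ?_⟩
  have hCle : C2 * C1 ^ (1 / q) ≤ ENNReal.ofReal ((C2 * C1 ^ (1 / q)).toReal + 1) := by
    conv_lhs => rw [← ENNReal.ofReal_toReal hCt]
    exact ENNReal.ofReal_le_ofReal (by linarith)
  have hf1 : ContDiff ℝ 1 f := hf.1.of_le (by exact_mod_cast le_top)
  by_cases hI : ∫⁻ x : Rn n, ENNReal.ofReal (‖x‖ ^ lam * gradNorm f x) ^ p = ⊤
  · rw [hI, ENNReal.top_rpow_of_pos (by positivity), ENNReal.mul_top]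
    · exact le_top
    · rw [Ne, ENNReal.ofReal_eq_zero, not_le]; positivity
  have hS := final_scale n hn p q lam hp0 hq0 (Ker n α Ω) mK C1 hW (gradNorm f) (gradNorm_cont f hf1).measurable (fun y => norm_nonneg _) hI
  have hpt : ∀ x : Rn n, ENNReal.ofReal (‖x‖ ^ lam * |roughOp n α Ω f x|) ^ q ≤
      C2 ^ q * (ENNReal.ofReal (‖x‖ ^ lam) * ∫⁻ y, Ker n α Ω (x - y) * ENNReal.ofReal (gradNorm f y)) ^ q := by
    intro x
    rw [← ENNReal.mul_rpow_of_nonneg _ _ hq0.le, ENNReal.ofReal_mul (by positivity), mul_left_comm]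
    refine ENNReal.rpow_le_rpow ?_ hq0.le
    gcongr
    exact (op_le_B n hn α hαn Ω hΩmeas hfin1 hmean f hf x).trans (hB f hf1 x)
  calc _ ≤ (∫⁻ x : Rn n, C2 ^ q * (ENNReal.ofReal (‖x‖ ^ lam) * ∫⁻ y, Ker n α Ω (x - y) * ENNReal.ofReal (gradNorm f y)) ^ q) ^ (1 / q) :=
        ENNReal.rpow_le_rpow (lintegral_mono hpt) (by positivity)
    _ = C2 * (∫⁻ x : Rn n, (ENNReal.ofReal (‖x‖ ^ lam) * ∫⁻ y, Ker n α Ω (x - y) * ENNReal.ofReal (gradNorm f y)) ^ q) ^ (1 / q) := by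
        rw [lintegral_const_mul' _ _ (ENNReal.rpow_ne_top_of_nonneg hq0.le hC2), ENNReal.mul_rpow_of_nonneg _ _ (by positivity), ← ENNReal.rpow_mul,
          mul_one_div_cancel hq0.ne', ENNReal.rpow_one]
    _ ≤ C2 * (C1 ^ (1 / q) * (∫⁻ x : Rn n, ENNReal.ofReal (‖x‖ ^ lam * gradNorm f x) ^ p) ^ (1 / p)) := by gcongr
    _ = (C2 * C1 ^ (1 / q)) * (∫⁻ x : Rn n, ENNReal.ofReal (‖x‖ ^ lam * gradNorm f x) ^ p) ^ (1 / p) := by ring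
    _ ≤ _ := by gcongr


end
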